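/- arXiv:2207.11758 — 2 statements merged into one kernel-verified Lean document; each statement's English description precedes it below -/
import Mathlib

section
/- For every integer k ≥ 1 there exists a constant c_k > 0 such that the following holds. Let H : ℕ → ℕ be any function with H(X) → ∞ as X → ∞ and H(X) ≤ X·(log X)^{−c_k} for all sufficiently large X. Then, with 𝔼_f the Steinhaus expectation at level y = X + H(X) and A_H(f,x) := H(X)^{-1/2} ∑_{x < n ≤ x+H(X)} f(n), one has 𝔼_f ( (1/X) ∑_{x=1}^{X} |A_H(f,x)|^{2k} − k! )² → 0 as X → ∞. -/
open MeasureTheory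

/-- The Steinhaus probability space at level `y`: a uniform random point
`ω p ∈ [0,1]` for each coordinate `p ≤ y` (only the prime coordinates are used);
the random multiplicative function has `f(p) = e^{2πi ω(p)}`, which is uniformly
distributed on the unit circle, independently over primes `p ≤ y`. -/
noncomputable def steinhausMeasure (y : ℕ) : Measure (Fin (y + 1) → ℝ) :=
  Measure.pi fun _ => volume.restrict (Set.Ioc (0 : ℝ) 1)

/-- The Steinhaus random completely multiplicative function at level `y`:
`f_ω(n) = ∏_{p ≤ y prime} e^{2πi ω(p) v_p(n)}`. -/
noncomputable def steinhausF (y : ℕ) (ω : Fin (y + 1) → ℝ) (n : ℕ) : ℂ :=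
  ∏ p ∈ (Finset.range (y + 1)).attach,
    if Nat.Prime (p : ℕ) then
      Complex.exp
        (((2 * Real.pi * ω ⟨(p : ℕ), Finset.mem_range.mp p.2⟩ *
            (padicValNat (p : ℕ) n : ℝ) : ℝ) : ℂ) * Complex.I)
    else 1

/-- `A_H(f, x) = H(X)^{-1/2} ∑_{x < n ≤ x + H(X)} f(n)` at level `y = X + H(X)`. -/
noncomputable def AHf (X : ℕ) (H : ℕ → ℕ) (ω : Fin (X + H X + 1) → ℝ) (x : ℕ) : ℂ :=
  ((Real.sqrt (H X) : ℂ))⁻¹ * ∑ n ∈ Finset.Ioc x (x + H X), steinhausF (X + H X) ω n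

/-!
Write `M(f)` for the mean of `|A_H(f,x)|^{2k}` over `x ≤ X`. Expanding the `k`-th power, `M` becomes
an average of `|∑_a f(∏ a_i)|²` over `k`-tuples `a` from short intervals, and by orthogonality
`𝔼 M` and `𝔼 M²` count coincidences between products. Permuting tuples with distinct entries gives
`𝔼 M ≥ k! · H(H-1)⋯(H-k+1) / H^k = k! - o(1)`, and `𝔼 (M - k!)² = 𝔼 M² - 2 k! 𝔼 M + k!²`, so it
remains to bound `𝔼 M²` from above by `k!² + o(1)`.

`𝔼 M²` is the average, over pairs of tuples `a` near `x` and `c` near `z`, of the number of pairs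
`(b, d)` near `(x, z)` with `∏ a ∏ c = ∏ b ∏ d`. If `b` is not a permutation of `a`, some `v` occurs
more often in `b` than in `a`; cancelling the occurrences of `v` shows that `v` divides
`∏_{a_i ≠ v} a_i · ∏ c`. The part of `v` coming from `a_i` divides `a_i - v ≠ 0`, so it is at
most `H`: a divisor of `∏ c` times small divisors of the `a_i` lands in the interval of `a`. The
proportion of pairs `(a, c)` for which this can happen is at most `H/X` times a power of `log X`.
On these pairs Cauchy–Schwarz and divisor moments lose only further powers of `log X`; on all other
pairs the count is at most `k!²`.
-/

section

open Finset

/-! ### Moments of the divisor function -/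

lemma card_divisors_mul_le (m n : ℕ) : #(m * n).divisors ≤ #m.divisors * #n.divisors := by
  rw [Nat.divisors_mul]
  exact card_mul_le

lemma card_divisors_prod_le {ι : Type*} (s : Finset ι) (a : ι → ℕ) :
    #(∏ i ∈ s, a i).divisors ≤ ∏ i ∈ s, #(a i).divisors :=
  le_prod_of_submultiplicative (fun n : ℕ => #n.divisors) (by simp) card_divisors_mul_le s a

lemma sum_sum_divisorsAntidiagonal_le {F : ℕ × ℕ → ℝ} (hF : ∀ p, 0 ≤ F p) (N : ℕ) :
    ∑ n ∈ Ioc 0 N, ∑ p ∈ n.divisorsAntidiagonal, F p ≤ ∑ p ∈ Ioc 0 N ×ˢ Ioc 0 N, F p := by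
  calc ∑ n ∈ Ioc 0 N, ∑ p ∈ n.divisorsAntidiagonal, F p
      = ∑ n ∈ Ioc 0 N, ∑ p ∈ Ioc 0 N ×ˢ Ioc 0 N with p.1 * p.2 = n, F p :=
        sum_congr rfl fun n hn => by
          have hn' := mem_Ioc.mp hn
          rw [Nat.divisorsAntidiagonal_eq_prod_filter_of_le hn'.1.ne' hn'.2]
    _ ≤ ∑ p ∈ Ioc 0 N ×ˢ Ioc 0 N, F p :=
        sum_fiberwise_le_sum_of_sum_fiber_nonneg fun n _ => sum_nonneg fun p _ => hF p

lemma sum_card_divisors_mul_le_sq {g : ℕ → ℝ} (hg : ∀ n, 0 ≤ g n)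
    (hmul : ∀ m n, g (m * n) ≤ g m * g n) (N : ℕ) :
    ∑ n ∈ Ioc 0 N, #n.divisors * g n ≤ (∑ n ∈ Ioc 0 N, g n) ^ 2 := by
  calc ∑ n ∈ Ioc 0 N, #n.divisors * g n
      = ∑ n ∈ Ioc 0 N, ∑ p ∈ n.divisorsAntidiagonal, g (p.1 * p.2) :=
        sum_congr rfl fun n _ => by
          rw [sum_congr rfl fun p hp => congrArg g (Nat.mem_divisorsAntidiagonal.mp hp).1,
            sum_const, nsmul_eq_mul, ← Nat.map_div_right_divisors, card_map]
    _ ≤ ∑ n ∈ Ioc 0 N, ∑ p ∈ n.divisorsAntidiagonal, g p.1 * g p.2 := by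
        gcongr
        exact hmul _ _
    _ ≤ ∑ p ∈ Ioc 0 N ×ˢ Ioc 0 N, g p.1 * g p.2 :=
        sum_sum_divisorsAntidiagonal_le (fun p => mul_nonneg (hg _) (hg _)) N
    _ = (∑ n ∈ Ioc 0 N, g n) ^ 2 := by rw [sq, sum_mul_sum, sum_product]

lemma sum_inv_Ioc_le (N : ℕ) : ∑ n ∈ Ioc 0 N, (n : ℝ)⁻¹ ≤ 1 + Real.log N := by
  rw [← Icc_add_one_left_eq_Ioc]
  simpa [harmonic_eq_sum_Icc] using harmonic_le_one_add_log N

lemma sum_card_divisors_pow_div_le (m N : ℕ) :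
    ∑ n ∈ Ioc 0 N, (#n.divisors : ℝ) ^ m / n ≤ (1 + Real.log N) ^ (2 ^ m) := by
  induction m with
  | zero => simpa using sum_inv_Ioc_le N
  | succ m ih =>
    have hmul (a b : ℕ) : (#(a * b).divisors : ℝ) ^ m / (a * b : ℕ) ≤
        #a.divisors ^ m / a * (#b.divisors ^ m / b) := by
      rw [div_mul_div_comm, ← mul_pow, Nat.cast_mul]
      gcongr
      exact_mod_cast card_divisors_mul_le a b
    calc ∑ n ∈ Ioc 0 N, (#n.divisors : ℝ) ^ (m + 1) / n
        = ∑ n ∈ Ioc 0 N, #n.divisors * ((#n.divisors : ℝ) ^ m / n) := by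
          simp only [pow_succ', mul_div_assoc]
      _ ≤ (∑ n ∈ Ioc 0 N, (#n.divisors : ℝ) ^ m / n) ^ 2 :=
          sum_card_divisors_mul_le_sq (fun n => by positivity) hmul N
      _ ≤ ((1 + Real.log N) ^ (2 ^ m)) ^ 2 := by gcongr
      _ = (1 + Real.log N) ^ (2 ^ (m + 1)) := by rw [← pow_mul, pow_succ]

lemma sum_card_divisors_pow_le (m N : ℕ) :
    ∑ n ∈ Ioc 0 N, (#n.divisors : ℝ) ^ m ≤ N * (1 + Real.log N) ^ (2 ^ m) := by
  calc ∑ n ∈ Ioc 0 N, (#n.divisors : ℝ) ^ m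
      ≤ ∑ n ∈ Ioc 0 N, N * ((#n.divisors : ℝ) ^ m / n) := by
        refine sum_le_sum fun n hn => ?_
        have hn' := mem_Ioc.mp hn
        have hn0 : (0 : ℝ) < n := mod_cast hn'.1
        rw [mul_div_left_comm]
        refine le_mul_of_one_le_right (by positivity) ?_
        rw [one_le_div hn0]
        exact_mod_cast hn'.2
    _ ≤ N * (1 + Real.log N) ^ (2 ^ m) := by
        rw [← mul_sum]
        gcongr
        exact sum_card_divisors_pow_div_le m N

lemma card_filter_mem_Ioc_le (s : Finset ℕ) (H n : ℕ) : #{x ∈ s | n ∈ Ioc x (x + H)} ≤ H := by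
  calc #{x ∈ s | n ∈ Ioc x (x + H)}
      ≤ #(Ico (n - H) n) := card_le_card fun x hx => by
        simp only [mem_filter, mem_Ioc, mem_Ico] at hx ⊢
        lia
    _ ≤ H := by rw [Nat.card_Ico]; lia

lemma sum_sum_Ioc_le {F : ℕ → ℝ} (hF : ∀ n, 0 ≤ F n) (H X : ℕ) :
    ∑ x ∈ Icc 1 X, ∑ n ∈ Ioc x (x + H), F n ≤ H * ∑ n ∈ Ioc 0 (X + H), F n := by
  calc ∑ x ∈ Icc 1 X, ∑ n ∈ Ioc x (x + H), F n
      = ∑ n ∈ Ioc 0 (X + H), ∑ x ∈ Icc 1 X with n ∈ Ioc x (x + H), F n :=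
        sum_comm' fun x n => by
          simp only [mem_Icc, mem_Ioc, mem_filter]
          lia
    _ ≤ ∑ n ∈ Ioc 0 (X + H), H * F n := by
        refine sum_le_sum fun n _ => ?_
        rw [sum_const, nsmul_eq_mul]
        gcongr
        · exact hF n
        · exact card_filter_mem_Ioc_le _ H n
    _ = H * ∑ n ∈ Ioc 0 (X + H), F n := by rw [mul_sum]

lemma sum_pow_le_card_pow_div_mul_sum_pow {ι : Type*} {s : Finset ι} (hs : s.Nonempty)
    {F : ι → ℝ} (hF : ∀ i ∈ s, 0 ≤ F i) (k : ℕ) :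
    (∑ i ∈ s, F i) ^ k ≤ (#s : ℝ) ^ k / #s * ∑ i ∈ s, F i ^ k := by
  have hs0 : (0 : ℝ) < #s := mod_cast hs.card_pos
  have h := Real.pow_arith_mean_le_arith_mean_pow s (fun _ => (#s : ℝ)⁻¹) F
    (fun _ _ => by positivity) (by simp [hs0.ne']) hF k
  rw [← mul_sum, ← mul_sum, mul_pow, inv_pow, inv_mul_le_iff₀ (by positivity)] at h
  rwa [div_eq_mul_inv, mul_assoc]

lemma card_filter_dvd_Ioc_le {g H : ℕ} (hg : 0 < g) (hgH : g ≤ H) (x : ℕ) :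
    (#{n ∈ Ioc x (x + H) | g ∣ n} : ℝ) ≤ 2 * H / g := by
  have hg0 : (0 : ℝ) < g := mod_cast hg
  have hcard : #{n ∈ Ioc x (x + H) | g ∣ n} ≤ H / g + 1 := by
    have hsub : {n ∈ Ioc x (x + H) | g ∣ n} ⊆ (Ioc (x / g) ((x + H) / g)).image (g * ·) := by
      intro n hn
      obtain ⟨hn, q, rfl⟩ := mem_filter.mp hn
      rw [mem_Ioc] at hn
      exact mem_image_of_mem _ (mem_Ioc.mpr ⟨Nat.div_lt_of_lt_mul hn.1,
        (Nat.le_div_iff_mul_le hg).mpr (by rw [mul_comm]; exact hn.2)⟩)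
    calc #{n ∈ Ioc x (x + H) | g ∣ n} ≤ (x + H) / g - x / g := by
          simpa using (card_le_card hsub).trans card_image_le
      _ ≤ H / g + 1 := by
          rw [Nat.add_div hg]
          split_ifs <;> lia
  calc (#{n ∈ Ioc x (x + H) | g ∣ n} : ℝ) ≤ (H / g : ℕ) + 1 := mod_cast hcard
    _ ≤ H / g + H / g := by
        gcongr
        · exact Nat.cast_div_le
        · rw [one_le_div hg0]
          exact_mod_cast hgH
    _ = 2 * H / g := by ring

/-! ### Tuples from short intervals -/

/-- The `k`-tuples of elements of `(x, x + H]`, which index the expansion of the `k`-th power of a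
sum over this short interval. -/
def shortTuples (k H x : ℕ) : Finset (Fin k → ℕ) :=
  Fintype.piFinset fun _ => Ioc x (x + H)

/-- The tuples of `shortTuples k H x` for all starting points `1 ≤ x ≤ X`, each paired with its
starting point because short intervals overlap. -/
def pointedTuples (k H X : ℕ) : Finset (Σ _ : ℕ, Fin k → ℕ) :=
  (Icc 1 X).sigma (shortTuples k H)

lemma mem_shortTuples {k H x : ℕ} {a : Fin k → ℕ} :
    a ∈ shortTuples k H x ↔ ∀ i, a i ∈ Ioc x (x + H) :=
  Fintype.mem_piFinset

lemma pos_of_mem_shortTuples {k H x : ℕ} {a : Fin k → ℕ} (ha : a ∈ shortTuples k H x)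
    (i : Fin k) : 0 < a i :=
  pos_of_gt (mem_Ioc.mp (mem_shortTuples.mp ha i)).1

lemma mem_shortTuples_of_mem_pointedTuples {k H X : ℕ} {p : Σ _ : ℕ, Fin k → ℕ}
    (hp : p ∈ pointedTuples k H X) : p.2 ∈ shortTuples k H p.1 :=
  (mem_sigma.mp hp).2

lemma card_pointedTuples (k H X : ℕ) : #(pointedTuples k H X) = X * H ^ k := by
  simp [pointedTuples, shortTuples]

lemma sum_shortTuples_prod {R : Type*} [CommSemiring R] (f : ℕ → R) (k H x : ℕ) :
    ∑ a ∈ shortTuples k H x, ∏ i, f (a i) = (∑ n ∈ Ioc x (x + H), f n) ^ k :=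
  (sum_pow' _ _ _).symm

lemma sum_pointedTuples_prod_le {H : ℕ} (hH : 1 ≤ H) {g : ℕ → ℝ} (hg : ∀ n, 0 ≤ g n) (k X : ℕ) :
    ∑ p ∈ pointedTuples k H X, ∏ i, g (p.2 i) ≤
      (H : ℝ) ^ k * ∑ n ∈ Ioc 0 (X + H), g n ^ k := by
  have hH0 : (H : ℝ) ≠ 0 := mod_cast (by lia : H ≠ 0)
  calc ∑ p ∈ pointedTuples k H X, ∏ i, g (p.2 i)
      = ∑ x ∈ Icc 1 X, (∑ n ∈ Ioc x (x + H), g n) ^ k := by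
        simp only [pointedTuples, sum_sigma, sum_shortTuples_prod]
    _ ≤ ∑ x ∈ Icc 1 X, (H : ℝ) ^ k / H * ∑ n ∈ Ioc x (x + H), g n ^ k := by
        refine sum_le_sum fun x _ => ?_
        simpa using sum_pow_le_card_pow_div_mul_sum_pow
          (nonempty_Ioc.mpr (Nat.lt_add_of_pos_right hH)) (fun n _ => hg n) k
    _ ≤ (H : ℝ) ^ k / H * (H * ∑ n ∈ Ioc 0 (X + H), g n ^ k) := by
        rw [← mul_sum]
        gcongr
        exact sum_sum_Ioc_le (fun n => pow_nonneg (hg n) k) H X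
    _ = (H : ℝ) ^ k * ∑ n ∈ Ioc 0 (X + H), g n ^ k := by field_simp

lemma sum_pointedTuples_prod_card_divisors_pow_le {H X : ℕ} (hH : 1 ≤ H) (hHX : H ≤ X)
    (k m : ℕ) :
    ∑ p ∈ pointedTuples k H X, ∏ i, (#(p.2 i).divisors : ℝ) ^ m ≤
      (H : ℝ) ^ k * (2 * X * (1 + Real.log (2 * X)) ^ (2 ^ (m * k))) := by
  have hcast : ((X + H : ℕ) : ℝ) ≤ 2 * X := mod_cast (by lia : X + H ≤ 2 * X)
  have hlog : Real.log (X + H : ℕ) ≤ Real.log (2 * X) :=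
    Real.log_le_log (mod_cast (by lia : 0 < X + H)) hcast
  calc ∑ p ∈ pointedTuples k H X, ∏ i, (#(p.2 i).divisors : ℝ) ^ m
      ≤ (H : ℝ) ^ k * ∑ n ∈ Ioc 0 (X + H), ((#n.divisors : ℝ) ^ m) ^ k :=
        sum_pointedTuples_prod_le hH (g := fun n => (#n.divisors : ℝ) ^ m)
          (fun n => by positivity) k X
    _ ≤ (H : ℝ) ^ k * ((X + H : ℕ) * (1 + Real.log (X + H : ℕ)) ^ (2 ^ (m * k))) := by
        simp only [← pow_mul]
        gcongr
        exact sum_card_divisors_pow_le (m * k) (X + H)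
    _ ≤ (H : ℝ) ^ k * (2 * X * (1 + Real.log (2 * X)) ^ (2 ^ (m * k))) := by gcongr

/-! ### Coincidences between products -/

lemma exists_prod_eq_of_dvd_prod {ι M : Type*} [CommMonoid M] [DecompositionMonoid M]
    [Subsingleton Mˣ] (s : Finset ι) (a : ι → M) {d : M} (hd : d ∣ ∏ i ∈ s, a i) :
    ∃ g : ι → M, (∀ i ∈ s, g i ∣ a i) ∧ ∏ i ∈ s, g i = d := by
  classical
  induction s using Finset.induction_on generalizing d with
  | empty =>
    rw [prod_empty] at hd
    exact ⟨a, by simp, (isUnit_iff_eq_one.mp (isUnit_of_dvd_one hd)).symm⟩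
  | insert j s hj ih =>
    rw [prod_insert hj] at hd
    obtain ⟨d₁, d₂, hd₁, hd₂, rfl⟩ := exists_dvd_and_dvd_of_dvd_mul hd
    obtain ⟨g, hg, rfl⟩ := ih hd₂
    have hupdate : ∀ i ∈ s, Function.update g j d₁ i = g i := fun i hi =>
      Function.update_of_ne (ne_of_mem_of_not_mem hi hj) _ _
    refine ⟨Function.update g j d₁, forall_mem_insert .. |>.mpr ⟨by simpa using hd₁, ?_⟩, ?_⟩
    · exact fun i hi => by simpa only [hupdate i hi] using hg i hi
    · rw [prod_insert hj, Function.update_self, prod_congr rfl hupdate]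

lemma exists_perm_eq_comp_of_card_fiber_le {ι α : Type*} [Fintype ι] [DecidableEq α]
    {a b : ι → α} (h : ∀ v, #{j | b j = v} ≤ #{i | a i = v}) :
    ∃ σ : Equiv.Perm ι, b = a ∘ σ := by
  have hcount (c : ι → α) (v : α) : (univ.val.map c).count v = #{i | c i = v} := by
    simp only [Multiset.count_map, ← filter_val, card_val, eq_comm]
  have hmap : univ.val.map b = univ.val.map a :=
    Multiset.eq_of_le_of_card_le (Multiset.le_iff_count.mpr fun v => by
      simpa only [hcount] using h v) (by simp)
  have hcard (v : α) : Fintype.card {j // b j = v} = Fintype.card {i // a i = v} := by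
    rw [Fintype.card_subtype, Fintype.card_subtype, ← hcount, ← hcount, hmap]
  exact ⟨Equiv.ofFiberEquiv fun v => Fintype.equivOfCardEq (hcard v),
    funext fun i => (Equiv.ofFiberEquiv_map _ i).symm⟩

lemma prod_eq_pow_card_mul_prod_ne {ι M : Type*} [Fintype ι] [CommMonoid M] [DecidableEq M]
    (a : ι → M) (v : M) : ∏ i, a i = v ^ #{i | a i = v} * ∏ i, if a i ≠ v then a i else 1 := by
  rw [← prod_filter_mul_prod_filter_not univ (a · = v), prod_filter (a · ≠ v),
    prod_eq_pow_card fun i hi => (mem_filter.mp hi).2]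

lemma dvd_prod_ne_mul_of_card_fiber_lt {ι M : Type*} [Fintype ι] [CommMonoidWithZero M]
    [IsCancelMulZero M] [DecidableEq M] {a b : ι → M} {C D v : M} (hv : v ≠ 0)
    (hlt : #{i | a i = v} < #{j | b j = v}) (h : (∏ i, a i) * C = (∏ j, b j) * D) :
    v ∣ (∏ i, if a i ≠ v then a i else 1) * C := by
  rw [prod_eq_pow_card_mul_prod_ne a v, prod_eq_pow_card_mul_prod_ne b v, mul_assoc,
    mul_assoc] at h
  refine (mul_dvd_mul_iff_left (pow_ne_zero #{i | a i = v} hv)).mp ?_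
  rw [h, ← pow_succ]
  exact (pow_dvd_pow v hlt).mul_right _

/-- Some product of divisors of the `a i`, each at most `H`, and of a divisor of `C` lies in
`(x, x + H]`. This is what a coincidence between products of elements of `(x, x + H]` forces
unless it comes from a permutation. -/
def HasShortDivisorProduct {ι : Type*} [Fintype ι] (H x : ℕ) (a : ι → ℕ) (C : ℕ) : Prop :=
  ∃ e, e ∣ C ∧ ∃ g : ι → ℕ, (∀ i, g i ∣ a i ∧ g i ≤ H) ∧ e * ∏ i, g i ∈ Ioc x (x + H)

lemma le_of_dvd_of_mem_Ioc_of_ne {g x H m n : ℕ} (hm : m ∈ Ioc x (x + H)) (hn : n ∈ Ioc x (x + H))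
    (hmn : m ≠ n) (hgm : g ∣ m) (hgn : g ∣ n) : g ≤ H := by
  rw [mem_Ioc] at hm hn
  rcases hmn.lt_or_gt with hlt | hlt
  · exact (Nat.le_of_dvd (by lia) (Nat.dvd_sub hgn hgm)).trans (by lia)
  · exact (Nat.le_of_dvd (by lia) (Nat.dvd_sub hgm hgn)).trans (by lia)

lemma exists_perm_or_hasShortDivisorProduct {ι : Type*} [Fintype ι] {H x C D : ℕ} {a b : ι → ℕ}
    (ha : ∀ i, a i ∈ Ioc x (x + H)) (hb : ∀ i, b i ∈ Ioc x (x + H))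
    (h : (∏ i, a i) * C = (∏ i, b i) * D) :
    (∃ σ : Equiv.Perm ι, b = a ∘ σ) ∨ HasShortDivisorProduct H x a C := by
  by_cases hfib : ∀ v, #{j | b j = v} ≤ #{i | a i = v}
  · exact .inl (exists_perm_eq_comp_of_card_fiber_le hfib)
  push Not at hfib
  obtain ⟨v, hlt⟩ := hfib
  obtain ⟨j, hj⟩ := card_pos.mp (pos_of_gt hlt)
  obtain rfl : b j = v := (mem_filter.mp hj).2
  have hvmem := mem_Ioc.mp (hb j)
  obtain ⟨d, e, hd, he, hde⟩ := exists_dvd_and_dvd_of_dvd_mul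
    (dvd_prod_ne_mul_of_card_fiber_lt (by lia) hlt h)
  obtain ⟨g, hg, rfl⟩ := exists_prod_eq_of_dvd_prod univ _ hd
  refine .inr ⟨e, he, g, fun i => ?_, by rw [mul_comm, ← hde]; exact hb j⟩
  have hgi := hg i (mem_univ i)
  split_ifs at hgi with hne
  · exact ⟨hgi, le_of_dvd_of_mem_Ioc_of_ne (ha i) (hb j) hne hgi
      (hde ▸ (dvd_prod_of_mem g (mem_univ i)).mul_right e)⟩
  · rw [Nat.dvd_one.mp hgi]
    exact ⟨one_dvd _, by lia⟩

/-! ### Rarity of short divisor products -/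

lemma log_two_mul_natCast_nonneg (n : ℕ) : 0 ≤ Real.log (2 * n) := by
  exact_mod_cast Real.log_natCast_nonneg (2 * n)

lemma card_pointedTuples_filter_dvd_le {k H : ℕ} {g : Fin k → ℕ} (hg : ∀ i, g i ∈ Ioc 0 H)
    (n X : ℕ) :
    (#{p ∈ pointedTuples k H X | (∀ i, g i ∣ p.2 i) ∧ n ∈ Ioc p.1 (p.1 + H)} : ℝ) ≤
      H * ∏ i, (2 * H / g i : ℝ) := by
  have hsigma : {p ∈ pointedTuples k H X | (∀ i, g i ∣ p.2 i) ∧ n ∈ Ioc p.1 (p.1 + H)} =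
      {x ∈ Icc 1 X | n ∈ Ioc x (x + H)}.sigma fun x =>
        Fintype.piFinset fun i => {m ∈ Ioc x (x + H) | g i ∣ m} := by
    ext p
    simp only [pointedTuples, mem_filter, mem_sigma, mem_shortTuples, Fintype.mem_piFinset,
      forall_and]
    tauto
  calc (#{p ∈ pointedTuples k H X | (∀ i, g i ∣ p.2 i) ∧ n ∈ Ioc p.1 (p.1 + H)} : ℝ)
      = ∑ x ∈ Icc 1 X with n ∈ Ioc x (x + H),
          ∏ i, (#{m ∈ Ioc x (x + H) | g i ∣ m} : ℝ) := by
        simp only [hsigma, card_sigma, Fintype.card_piFinset, Nat.cast_sum, Nat.cast_prod]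
    _ ≤ ∑ x ∈ Icc 1 X with n ∈ Ioc x (x + H), ∏ i, (2 * H / g i : ℝ) := by
        gcongr with x _ i _
        have hgi := mem_Ioc.mp (hg i)
        exact card_filter_dvd_Ioc_le hgi.1 hgi.2 x
    _ ≤ H * ∏ i, (2 * H / g i : ℝ) := by
        rw [sum_const, nsmul_eq_mul]
        gcongr
        exact card_filter_mem_Ioc_le _ H n

lemma card_filter_exists_le_sum {α β : Type*} (s : Finset α) (t : Finset β) (P : β → α → Prop)
    [∀ b, DecidablePred (P b)] [DecidablePred fun a => ∃ b ∈ t, P b a] :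
    #{a ∈ s | ∃ b ∈ t, P b a} ≤ ∑ b ∈ t, #{a ∈ s | P b a} := by
  classical
  calc #{a ∈ s | ∃ b ∈ t, P b a} ≤ #(t.biUnion fun b => {a ∈ s | P b a}) :=
        card_le_card fun a ha => by
          obtain ⟨has, b, hb, hab⟩ := mem_filter.mp ha
          exact mem_biUnion.mpr ⟨b, hb, mem_filter.mpr ⟨has, hab⟩⟩
    _ ≤ ∑ b ∈ t, #{a ∈ s | P b a} := card_biUnion_le

lemma card_pointedTuples_filter_exists_le (k H X e : ℕ) :
    (#{p ∈ pointedTuples k H X |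
      ∃ g ∈ Fintype.piFinset fun _ : Fin k => Ioc 0 H,
        (∀ i, g i ∣ p.2 i) ∧ e * ∏ i, g i ∈ Ioc p.1 (p.1 + H)} : ℝ) ≤
      H * (2 * H * (1 + Real.log H)) ^ k := by
  calc (#{p ∈ pointedTuples k H X |
        ∃ g ∈ Fintype.piFinset fun _ : Fin k => Ioc 0 H,
          (∀ i, g i ∣ p.2 i) ∧ e * ∏ i, g i ∈ Ioc p.1 (p.1 + H)} : ℝ)
      ≤ ∑ g ∈ Fintype.piFinset fun _ : Fin k => Ioc 0 H,
          (#{p ∈ pointedTuples k H X |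
            (∀ i, g i ∣ p.2 i) ∧ e * ∏ i, g i ∈ Ioc p.1 (p.1 + H)} : ℝ) :=
        mod_cast card_filter_exists_le_sum _ _ _
    _ ≤ ∑ g ∈ Fintype.piFinset fun _ : Fin k => Ioc 0 H, H * ∏ i, (2 * H / g i : ℝ) :=
        sum_le_sum fun g hg =>
          card_pointedTuples_filter_dvd_le (Fintype.mem_piFinset.mp hg) _ X
    _ = H * (2 * H * ∑ n ∈ Ioc 0 H, (n : ℝ)⁻¹) ^ k := by
        rw [← mul_sum, ← sum_pow' _ (fun n : ℕ => (2 * H / n : ℝ)), mul_sum]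
        simp only [div_eq_mul_inv]
    _ ≤ H * (2 * H * (1 + Real.log H)) ^ k := by
        gcongr
        exact sum_inv_Ioc_le H

open Classical in
lemma card_hasShortDivisorProduct_le (k H X : ℕ) {C : ℕ} (hC : C ≠ 0) :
    (#{p ∈ pointedTuples k H X | HasShortDivisorProduct H p.1 p.2 C} : ℝ) ≤
      #C.divisors * (H * (2 * H * (1 + Real.log H)) ^ k) := by
  have hexists (p : Σ _ : ℕ, Fin k → ℕ) : HasShortDivisorProduct H p.1 p.2 C →
      ∃ e ∈ C.divisors, ∃ g ∈ Fintype.piFinset fun _ : Fin k => Ioc 0 H,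
        (∀ i, g i ∣ p.2 i) ∧ e * ∏ i, g i ∈ Ioc p.1 (p.1 + H) := by
    rintro ⟨e, he, g, hg, hmem⟩
    have hg0 := prod_ne_zero_iff.mp (right_ne_zero_of_mul (mem_Ioc.mp hmem).1.ne_bot)
    exact ⟨e, Nat.mem_divisors.mpr ⟨he, hC⟩, g, Fintype.mem_piFinset.mpr fun i =>
      mem_Ioc.mpr ⟨Nat.pos_of_ne_zero (hg0 i (mem_univ i)), (hg i).2⟩, fun i => (hg i).1, hmem⟩
  calc (#{p ∈ pointedTuples k H X | HasShortDivisorProduct H p.1 p.2 C} : ℝ)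
      ≤ ∑ e ∈ C.divisors, (#{p ∈ pointedTuples k H X |
          ∃ g ∈ Fintype.piFinset fun _ : Fin k => Ioc 0 H,
            (∀ i, g i ∣ p.2 i) ∧ e * ∏ i, g i ∈ Ioc p.1 (p.1 + H)} : ℝ) :=
        mod_cast (card_le_card (monotone_filter_right _ fun p _ => hexists p)).trans
          (card_filter_exists_le_sum _ _ _)
    _ ≤ ∑ _e ∈ C.divisors, (H * (2 * H * (1 + Real.log H)) ^ k : ℝ) :=
        sum_le_sum fun e _ => card_pointedTuples_filter_exists_le k H X e
    _ = #C.divisors * (H * (2 * H * (1 + Real.log H)) ^ k) := by rw [sum_const, nsmul_eq_mul]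

lemma prod_ne_zero_of_mem_pointedTuples {k H X : ℕ} {p : Σ _ : ℕ, Fin k → ℕ}
    (hp : p ∈ pointedTuples k H X) : ∏ i, p.2 i ≠ 0 :=
  prod_ne_zero_iff.mpr fun i _ =>
    (pos_of_mem_shortTuples (mem_shortTuples_of_mem_pointedTuples hp) i).ne'

open Classical in
lemma card_pairs_hasShortDivisorProduct_le {H X : ℕ} (hH : 1 ≤ H) (hHX : H ≤ X) (k : ℕ) :
    (#{r ∈ pointedTuples k H X ×ˢ pointedTuples k H X |
      HasShortDivisorProduct H r.1.1 r.1.2 (∏ i, r.2.2 i)} : ℝ) ≤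
      (X * (H : ℝ) ^ k) ^ 2 *
        (2 ^ (k + 1) * (H / X) * (1 + Real.log (2 * X)) ^ (k + 2 ^ k)) := by
  have hH0 : (0 : ℝ) < H := mod_cast hH
  have hHX' : (H : ℝ) ≤ X := mod_cast hHX
  have hlog : Real.log H ≤ Real.log (2 * X) := Real.log_le_log hH0 (by linarith)
  have hlog0 := log_two_mul_natCast_nonneg X
  have hX0 : (X : ℝ) ≠ 0 := (hH0.trans_le hHX').ne'
  calc (#{r ∈ pointedTuples k H X ×ˢ pointedTuples k H X |
        HasShortDivisorProduct H r.1.1 r.1.2 (∏ i, r.2.2 i)} : ℝ)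
      = ∑ q ∈ pointedTuples k H X,
          (#{p ∈ pointedTuples k H X | HasShortDivisorProduct H p.1 p.2 (∏ i, q.2 i)} : ℝ) := by
        rw [card_filter, sum_product_right]
        simp only [← card_filter, Nat.cast_sum]
    _ ≤ ∑ q ∈ pointedTuples k H X,
          (∏ i, (#(q.2 i).divisors : ℝ) ^ 1) * (H * (2 * H * (1 + Real.log (2 * X))) ^ k) := by
        refine sum_le_sum fun q hq => ?_
        refine (card_hasShortDivisorProduct_le k H X
          (prod_ne_zero_of_mem_pointedTuples hq)).trans ?_
        simp only [pow_one]
        gcongr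
        exact_mod_cast card_divisors_prod_le univ q.2
    _ ≤ (H : ℝ) ^ k * (2 * X * (1 + Real.log (2 * X)) ^ (2 ^ k)) *
          (H * (2 * H * (1 + Real.log (2 * X))) ^ k) := by
        rw [← sum_mul]
        gcongr ?_ * _
        simpa only [one_mul] using sum_pointedTuples_prod_card_divisors_pow_le hH hHX k 1
    _ = (X * (H : ℝ) ^ k) ^ 2 *
          (2 ^ (k + 1) * (H / X) * (1 + Real.log (2 * X)) ^ (k + 2 ^ k)) := by
        rw [mul_pow (2 * (H : ℝ)), mul_pow 2]
        field_simp
        ring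

/-! ### Counting coincidences -/

/-- The number of pairs of tuples from the short intervals of `p` and `q` with the same total
product as `p` and `q`; these are the terms surviving in the square of the moment. -/
def coincidenceCount {k : ℕ} (H : ℕ) (p q : Σ _ : ℕ, Fin k → ℕ) : ℕ :=
  #{s ∈ shortTuples k H p.1 ×ˢ shortTuples k H q.1 |
    (∏ i, p.2 i) * ∏ i, q.2 i = (∏ i, s.1 i) * ∏ i, s.2 i}

lemma coincidenceCount_le_prod_card_divisors {k : ℕ} (H : ℕ) {p q : Σ _ : ℕ, Fin k → ℕ}
    (hp : ∏ i, p.2 i ≠ 0) (hq : ∏ i, q.2 i ≠ 0) :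
    coincidenceCount H p q ≤
      ((∏ i, #(p.2 i).divisors) * ∏ i, #(q.2 i).divisors) ^ (2 * k) := by
  set N := (∏ i, p.2 i) * ∏ i, q.2 i
  have hN : N ≠ 0 := mul_ne_zero hp hq
  calc coincidenceCount H p q
      ≤ #((Fintype.piFinset fun _ : Fin k => N.divisors) ×ˢ
          Fintype.piFinset fun _ : Fin k => N.divisors) := by
        refine card_le_card fun s hs => ?_
        have hs' : N = (∏ i, s.1 i) * ∏ i, s.2 i := (mem_filter.mp hs).2
        simp only [mem_product, Fintype.mem_piFinset, Nat.mem_divisors, ne_eq, hN,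
          not_false_eq_true, and_true]
        rw [hs']
        exact ⟨fun i => (dvd_prod_of_mem _ (mem_univ i)).mul_right _,
          fun i => (dvd_prod_of_mem _ (mem_univ i)).mul_left _⟩
    _ = #N.divisors ^ (2 * k) := by
        rw [card_product, Fintype.card_piFinset_const, ← sq, ← pow_mul, mul_comm]
    _ ≤ ((∏ i, #(p.2 i).divisors) * ∏ i, #(q.2 i).divisors) ^ (2 * k) := by
        gcongr
        exact (card_divisors_mul_le _ _).trans
          (Nat.mul_le_mul (card_divisors_prod_le _ _) (card_divisors_prod_le _ _))

lemma coincidenceCount_le_factorial_sq {k H : ℕ} {p q : Σ _ : ℕ, Fin k → ℕ}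
    (hp : p.2 ∈ shortTuples k H p.1) (hq : q.2 ∈ shortTuples k H q.1)
    (hpq : ¬ HasShortDivisorProduct H p.1 p.2 (∏ i, q.2 i))
    (hqp : ¬ HasShortDivisorProduct H q.1 q.2 (∏ i, p.2 i)) :
    coincidenceCount H p q ≤ k.factorial ^ 2 := by
  calc coincidenceCount H p q
      ≤ #((univ : Finset (Equiv.Perm (Fin k) × Equiv.Perm (Fin k))).image
          fun σ => (p.2 ∘ σ.1, q.2 ∘ σ.2)) := by
        refine card_le_card fun s hs => ?_
        obtain ⟨hs, h⟩ := mem_filter.mp hs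
        obtain ⟨hs₁, hs₂⟩ := mem_product.mp hs
        obtain ⟨σ, hσ⟩ := (exists_perm_or_hasShortDivisorProduct (mem_shortTuples.mp hp)
          (mem_shortTuples.mp hs₁) h).resolve_right hpq
        obtain ⟨τ, hτ⟩ := (exists_perm_or_hasShortDivisorProduct (mem_shortTuples.mp hq)
          (mem_shortTuples.mp hs₂) (by rw [mul_comm, h, mul_comm])).resolve_right hqp
        exact mem_image.mpr ⟨(σ, τ), mem_univ _, by rw [← hσ, ← hτ]⟩
    _ ≤ k.factorial ^ 2 := card_image_le.trans_eq (by simp [sq, Fintype.card_perm])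

lemma sum_coincidenceCount_sq_le {H X : ℕ} (hH : 1 ≤ H) (hHX : H ≤ X) (k : ℕ) :
    ∑ r ∈ pointedTuples k H X ×ˢ pointedTuples k H X, (coincidenceCount H r.1 r.2 : ℝ) ^ 2 ≤
      (X * (H : ℝ) ^ k) ^ 2 * (4 * (1 + Real.log (2 * X)) ^ (2 * 2 ^ (4 * k * k))) := by
  have hsq {p q : Σ _ : ℕ, Fin k → ℕ} (hp : p ∈ pointedTuples k H X)
      (hq : q ∈ pointedTuples k H X) : (coincidenceCount H p q : ℝ) ^ 2 ≤
        (∏ i, (#(p.2 i).divisors : ℝ) ^ (4 * k)) * ∏ i, (#(q.2 i).divisors : ℝ) ^ (4 * k) := by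
    have h := coincidenceCount_le_prod_card_divisors H (prod_ne_zero_of_mem_pointedTuples hp)
      (prod_ne_zero_of_mem_pointedTuples hq)
    calc (coincidenceCount H p q : ℝ) ^ 2
        ≤ (((∏ i, (#(p.2 i).divisors : ℝ)) * ∏ i, (#(q.2 i).divisors : ℝ)) ^ (2 * k)) ^ 2 := by
          gcongr
          exact_mod_cast h
      _ = (∏ i, (#(p.2 i).divisors : ℝ) ^ (4 * k)) * ∏ i, (#(q.2 i).divisors : ℝ) ^ (4 * k) := by
          rw [prod_pow, prod_pow, ← mul_pow, ← pow_mul]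
          ring_nf
  calc ∑ r ∈ pointedTuples k H X ×ˢ pointedTuples k H X, (coincidenceCount H r.1 r.2 : ℝ) ^ 2
      ≤ ∑ r ∈ pointedTuples k H X ×ˢ pointedTuples k H X,
          (∏ i, (#(r.1.2 i).divisors : ℝ) ^ (4 * k)) *
            ∏ i, (#(r.2.2 i).divisors : ℝ) ^ (4 * k) :=
        sum_le_sum fun r hr => hsq (mem_product.mp hr).1 (mem_product.mp hr).2
    _ = (∑ p ∈ pointedTuples k H X, ∏ i, (#(p.2 i).divisors : ℝ) ^ (4 * k)) ^ 2 := by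
        rw [sq, sum_mul_sum, sum_product]
    _ ≤ ((H : ℝ) ^ k * (2 * X * (1 + Real.log (2 * X)) ^ (2 ^ (4 * k * k)))) ^ 2 := by
        gcongr
        exact sum_pointedTuples_prod_card_divisors_pow_le hH hHX k (4 * k)
    _ = (X * (H : ℝ) ^ k) ^ 2 * (4 * (1 + Real.log (2 * X)) ^ (2 * 2 ^ (4 * k * k))) := by
        rw [pow_mul' _ 2]
        ring

lemma sum_le_card_mul_add_sqrt {α : Type*} (s : Finset α) (P : α → Prop) [DecidablePred P]
    (f : α → ℝ) {C : ℝ} (hC : 0 ≤ C) (hf : ∀ a ∈ s, ¬ P a → f a ≤ C) :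
    ∑ a ∈ s, f a ≤ #s * C + √(#{a ∈ s | P a} * ∑ a ∈ s, f a ^ 2) := by
  have hgood : ∑ a ∈ s with ¬ P a, f a ≤ #s * C := by
    calc ∑ a ∈ s with ¬ P a, f a ≤ #{a ∈ s | ¬ P a} * C := by
          rw [← nsmul_eq_mul]
          exact sum_le_card_nsmul _ _ _ fun a ha =>
            hf a (mem_filter.mp ha).1 (mem_filter.mp ha).2
      _ ≤ #s * C := by
          gcongr
          exact filter_subset _ _
  have hbad : ∑ a ∈ s with P a, f a ≤ √(#{a ∈ s | P a} * ∑ a ∈ s, f a ^ 2) := by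
    refine Real.le_sqrt_of_sq_le (sq_sum_le_card_mul_sum_sq.trans ?_)
    gcongr
    exact filter_subset _ _
  rw [← sum_filter_add_sum_filter_not s P]
  linarith

open Classical in
lemma card_pairs_hasShortDivisorProduct_or_le {H X : ℕ} (hH : 1 ≤ H) (hHX : H ≤ X) (k : ℕ) :
    (#{r ∈ pointedTuples k H X ×ˢ pointedTuples k H X |
      HasShortDivisorProduct H r.1.1 r.1.2 (∏ i, r.2.2 i) ∨
        HasShortDivisorProduct H r.2.1 r.2.2 (∏ i, r.1.2 i)} : ℝ) ≤
      (X * (H : ℝ) ^ k) ^ 2 *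
        (2 ^ (k + 2) * (H / X) * (1 + Real.log (2 * X)) ^ (k + 2 ^ k)) := by
  have hswap : #{r ∈ pointedTuples k H X ×ˢ pointedTuples k H X |
      HasShortDivisorProduct H r.2.1 r.2.2 (∏ i, r.1.2 i)} =
      #{r ∈ pointedTuples k H X ×ˢ pointedTuples k H X |
        HasShortDivisorProduct H r.1.1 r.1.2 (∏ i, r.2.2 i)} :=
    card_nbij' Prod.swap Prod.swap (by simp +contextual [Set.MapsTo])
      (by simp +contextual [Set.MapsTo]) (fun r _ => r.swap_swap) (fun r _ => r.swap_swap)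
  have hunion : (#{r ∈ pointedTuples k H X ×ˢ pointedTuples k H X |
      HasShortDivisorProduct H r.1.1 r.1.2 (∏ i, r.2.2 i) ∨
        HasShortDivisorProduct H r.2.1 r.2.2 (∏ i, r.1.2 i)} : ℝ) ≤
      2 * #{r ∈ pointedTuples k H X ×ˢ pointedTuples k H X |
        HasShortDivisorProduct H r.1.1 r.1.2 (∏ i, r.2.2 i)} := by
    rw [filter_or]
    exact_mod_cast (card_union_le _ _).trans_eq (by rw [hswap, two_mul])
  refine hunion.trans ((mul_le_mul_of_nonneg_left
    (card_pairs_hasShortDivisorProduct_le hH hHX k) zero_le_two).trans_eq ?_)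
  ring

/-- The exponent of the logarithm lost in bounding the off-diagonal coincidences:
`2 * 2 ^ (4 * k * k)` comes from the divisor moments in `sum_coincidenceCount_sq_le`, and
`k + 2 ^ k` from the count of exceptional pairs in `card_pairs_hasShortDivisorProduct_or_le`. -/
def logExponent (k : ℕ) : ℕ := 2 * 2 ^ (4 * k * k) + (k + 2 ^ k)

lemma sum_coincidenceCount_le {H X : ℕ} (hH : 1 ≤ H) (hHX : H ≤ X) (k : ℕ) :
    ∑ r ∈ pointedTuples k H X ×ˢ pointedTuples k H X, (coincidenceCount H r.1 r.2 : ℝ) ≤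
      (X * (H : ℝ) ^ k) ^ 2 * ((k.factorial : ℝ) ^ 2 +
        √(2 ^ (k + 4) * (H / X * (1 + Real.log (2 * X)) ^ logExponent k))) := by
  classical
  have hlog := log_two_mul_natCast_nonneg X
  set P : (Σ _ : ℕ, Fin k → ℕ) × (Σ _ : ℕ, Fin k → ℕ) → Prop := fun r =>
    HasShortDivisorProduct H r.1.1 r.1.2 (∏ i, r.2.2 i) ∨
      HasShortDivisorProduct H r.2.1 r.2.2 (∏ i, r.1.2 i)
  have hgood : ∀ r ∈ pointedTuples k H X ×ˢ pointedTuples k H X, ¬ P r →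
      (coincidenceCount H r.1 r.2 : ℝ) ≤ (k.factorial : ℝ) ^ 2 := fun r hr hP => by
    rw [mem_product] at hr
    exact_mod_cast coincidenceCount_le_factorial_sq (mem_shortTuples_of_mem_pointedTuples hr.1)
      (mem_shortTuples_of_mem_pointedTuples hr.2) (not_or.mp hP).1 (not_or.mp hP).2
  have hsqrt : √(#{r ∈ pointedTuples k H X ×ˢ pointedTuples k H X | P r} *
      ∑ r ∈ pointedTuples k H X ×ˢ pointedTuples k H X, (coincidenceCount H r.1 r.2 : ℝ) ^ 2) ≤
      (X * (H : ℝ) ^ k) ^ 2 *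
        √(2 ^ (k + 4) * (H / X * (1 + Real.log (2 * X)) ^ logExponent k)) := by
    rw [← Real.sqrt_sq (sq_nonneg (X * (H : ℝ) ^ k)), ← Real.sqrt_mul (by positivity)]
    refine Real.sqrt_le_sqrt ?_
    refine (mul_le_mul (card_pairs_hasShortDivisorProduct_or_le hH hHX k)
      (sum_coincidenceCount_sq_le hH hHX k) (by positivity) (by positivity)).trans_eq ?_
    rw [logExponent, pow_add _ (2 * _)]
    ring
  calc ∑ r ∈ pointedTuples k H X ×ˢ pointedTuples k H X, (coincidenceCount H r.1 r.2 : ℝ)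
      ≤ #(pointedTuples k H X ×ˢ pointedTuples k H X) * (k.factorial : ℝ) ^ 2 +
          √(#{r ∈ pointedTuples k H X ×ˢ pointedTuples k H X | P r} *
            ∑ r ∈ pointedTuples k H X ×ˢ pointedTuples k H X,
              (coincidenceCount H r.1 r.2 : ℝ) ^ 2) :=
        sum_le_card_mul_add_sqrt _ P _ (by positivity) hgood
    _ ≤ (X * (H : ℝ) ^ k) ^ 2 * (k.factorial : ℝ) ^ 2 + (X * (H : ℝ) ^ k) ^ 2 *
          √(2 ^ (k + 4) * (H / X * (1 + Real.log (2 * X)) ^ logExponent k)) := by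
        rw [card_product, card_pointedTuples]
        push_cast
        rw [← sq]
        gcongr
    _ = (X * (H : ℝ) ^ k) ^ 2 * ((k.factorial : ℝ) ^ 2 +
          √(2 ^ (k + 4) * (H / X * (1 + Real.log (2 * X)) ^ logExponent k))) := by ring

lemma card_filter_injective_piFinset {ι α : Type*} [Fintype ι] [DecidableEq ι] [DecidableEq α]
    (s : Finset α) :
    #{a ∈ Fintype.piFinset fun _ : ι => s | Function.Injective a} =
      (#s).descFactorial (Fintype.card ι) := by
  rw [← Fintype.card_coe s, ← Fintype.card_embedding_eq, ← card_univ]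
  refine (card_bij (fun e _ i => (e i : α)) (fun e _ => ?_) (fun e _ e' _ h => ?_)
    fun a ha => ?_).symm
  · exact mem_filter.mpr ⟨Fintype.mem_piFinset.mpr fun i => (e i).2,
      Subtype.val_injective.comp e.injective⟩
  · exact DFunLike.ext _ _ fun i => Subtype.ext (congrFun h i)
  · obtain ⟨ha, hinj⟩ := mem_filter.mp ha
    exact ⟨⟨fun i => ⟨a i, Fintype.mem_piFinset.mp ha i⟩, fun i j hij =>
      hinj (congrArg Subtype.val hij)⟩, mem_univ _, rfl⟩

lemma factorial_mul_descFactorial_le_sum_card_prod_eq {ι M : Type*} [Fintype ι]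
    [DecidableEq ι] [CommMonoid M] [DecidableEq M] (s : Finset M) :
    (Fintype.card ι).factorial * (#s).descFactorial (Fintype.card ι) ≤
      ∑ a ∈ Fintype.piFinset fun _ : ι => s,
        #{b ∈ Fintype.piFinset fun _ : ι => s | ∏ i, a i = ∏ i, b i} := by
  have hperm : ∀ a ∈ {a ∈ Fintype.piFinset fun _ : ι => s | Function.Injective a},
      (Fintype.card ι).factorial ≤
        #{b ∈ Fintype.piFinset fun _ : ι => s | ∏ i, a i = ∏ i, b i} := fun a ha => by
    obtain ⟨ha, hinj⟩ := mem_filter.mp ha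
    rw [← Fintype.card_perm, ← card_univ]
    refine card_le_card_of_injOn (fun σ : Equiv.Perm ι => a ∘ σ) (fun σ _ => ?_)
      fun σ _ τ _ h => Equiv.ext fun i => hinj (congrFun h i)
    exact mem_filter.mpr ⟨Fintype.mem_piFinset.mpr fun i => Fintype.mem_piFinset.mp ha _,
      (Equiv.prod_comp σ a).symm⟩
  rw [mul_comm, ← card_filter_injective_piFinset, ← smul_eq_mul]
  exact (card_nsmul_le_sum _ _ _ hperm).trans
    (sum_le_sum_of_subset (filter_subset _ _))

/-! ### Orthogonality of Steinhaus functions -/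

lemma steinhausF_eq_prod_exp (y : ℕ) (ω : Fin (y + 1) → ℝ) (n : ℕ) :
    steinhausF y ω n =
      ∏ i : Fin (y + 1), Complex.exp (2 * Real.pi * Complex.I * (n.factorization i : ℤ) * ω i) := by
  refine prod_bij' (fun p _ => ⟨p, mem_range.mp p.2⟩) (fun i _ => ⟨i, mem_range.mpr i.2⟩)
    (by simp) (by simp) (by simp) (by simp) fun p _ => ?_
  split_ifs with hp
  · rw [Nat.factorization_def n hp]
    congr 1
    simp only [Int.cast_natCast]
    push_cast
    ring
  · simp [Nat.factorization_eq_zero_of_not_prime n hp]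

lemma steinhausF_mul (y : ℕ) (ω : Fin (y + 1) → ℝ) {m n : ℕ} (hm : m ≠ 0) (hn : n ≠ 0) :
    steinhausF y ω (m * n) = steinhausF y ω m * steinhausF y ω n := by
  simp only [steinhausF_eq_prod_exp, ← prod_mul_distrib, ← Complex.exp_add,
    Nat.factorization_mul hm hn, Finsupp.add_apply]
  push_cast
  simp only [mul_add, add_mul]

lemma steinhausF_prod {ι : Type*} (y : ℕ) (ω : Fin (y + 1) → ℝ) (s : Finset ι) {a : ι → ℕ}
    (ha : ∀ i ∈ s, a i ≠ 0) :
    steinhausF y ω (∏ i ∈ s, a i) = ∏ i ∈ s, steinhausF y ω (a i) := by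
  classical
  induction s using Finset.induction_on with
  | empty => simp [steinhausF_eq_prod_exp]
  | insert j s hj ih =>
    rw [forall_mem_insert] at ha
    rw [prod_insert hj, prod_insert hj, steinhausF_mul y ω ha.1 (prod_ne_zero_iff.mpr ha.2),
      ih ha.2]

@[fun_prop]
lemma continuous_steinhausF (y n : ℕ) : Continuous fun ω => steinhausF y ω n := by
  simp only [steinhausF_eq_prod_exp]
  fun_prop

instance isProbabilityMeasure_steinhausMeasure (y : ℕ) :
    IsProbabilityMeasure (steinhausMeasure y) := by
  have : IsProbabilityMeasure (volume.restrict (Set.Ioc (0 : ℝ) 1)) := ⟨by simp⟩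
  unfold steinhausMeasure
  infer_instance

lemma integrable_steinhausMeasure_of_continuous {E : Type*} [NormedAddCommGroup E] {y : ℕ}
    {f : (Fin (y + 1) → ℝ) → E} (hf : Continuous f) : Integrable f (steinhausMeasure y) := by
  have hsub : Set.univ.pi (fun _ : Fin (y + 1) => Set.Ioc (0 : ℝ) 1) ⊆ Set.Icc 0 1 := by
    rw [← Set.pi_univ_Icc]
    exact Set.pi_mono fun _ _ => Set.Ioc_subset_Icc_self
  rw [steinhausMeasure, ← Measure.restrict_pi_pi]
  exact (hf.integrableOn_Icc (μ := volume)).mono_set hsub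

lemma integral_exp_two_pi_int (j : ℤ) :
    ∫ t in Set.Ioc (0 : ℝ) 1, Complex.exp (2 * Real.pi * Complex.I * j * t) =
      if j = 0 then 1 else 0 := by
  rw [← intervalIntegral.integral_of_le zero_le_one]
  split_ifs with hj
  · simp [hj]
  · have hperiod : Complex.exp (2 * Real.pi * Complex.I * j * (1 : ℝ)) = 1 :=
      Complex.exp_eq_one_iff.mpr ⟨j, by push_cast; ring⟩
    rw [integral_exp_mul_complex (by simp [hj]), hperiod]
    simp

lemma eq_of_mem_smoothNumbers_of_factorization_eq {N m n : ℕ} (hm : m ∈ Nat.smoothNumbers N)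
    (hn : n ∈ Nat.smoothNumbers N) (h : ∀ p < N, m.factorization p = n.factorization p) :
    m = n := by
  have hzero {l p : ℕ} (hl : l ∈ Nat.smoothNumbers N) (hp : N ≤ p) : l.factorization p = 0 :=
    (Nat.factorization_eq_zero_iff l p).mpr <| by
      by_contra! hpl
      exact (Nat.mem_smoothNumbers'.mp hl p hpl.1 hpl.2.1).not_ge hp
  refine Nat.eq_of_factorization_eq (Nat.ne_zero_of_mem_smoothNumbers hm)
    (Nat.ne_zero_of_mem_smoothNumbers hn) fun p => ?_
  rcases lt_or_ge p N with hp | hp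
  · exact h p hp
  · rw [hzero hm hp, hzero hn hp]

lemma integral_steinhausF_mul_conj {y m n : ℕ} (hm : m ∈ Nat.smoothNumbers (y + 1))
    (hn : n ∈ Nat.smoothNumbers (y + 1)) :
    ∫ ω, steinhausF y ω m * (starRingEnd ℂ) (steinhausF y ω n) ∂steinhausMeasure y =
      if m = n then 1 else 0 := by
  set j : Fin (y + 1) → ℤ := fun i => (m.factorization i : ℤ) - n.factorization i
  have hexp (ω : Fin (y + 1) → ℝ) : steinhausF y ω m * (starRingEnd ℂ) (steinhausF y ω n) =
      ∏ i, Complex.exp (2 * Real.pi * Complex.I * j i * ω i) := by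
    simp only [steinhausF_eq_prod_exp, map_prod, ← prod_mul_distrib, ← Complex.exp_conj,
      ← Complex.exp_add, map_mul, Complex.conj_ofReal, Complex.conj_I, map_intCast, map_ofNat]
    refine prod_congr rfl fun i _ => ?_
    congr 1
    push_cast [j]
    ring
  have hj : (∀ i, j i = 0) ↔ m = n := by
    refine ⟨fun h => eq_of_mem_smoothNumbers_of_factorization_eq hm hn fun p hp => ?_, ?_⟩
    · exact_mod_cast sub_eq_zero.mp (h ⟨p, hp⟩)
    · rintro rfl i
      exact sub_self _
  simp only [hexp]
  rw [steinhausMeasure, integral_fintype_prod_eq_prod (𝕜 := ℂ)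
    (f := fun i (t : ℝ) => Complex.exp (2 * Real.pi * Complex.I * j i * t))]
  simp only [integral_exp_two_pi_int, Fintype.prod_ite_zero, prod_const_one, hj]

lemma integral_norm_sq_sum_steinhausF {ι : Type*} {y : ℕ} (T : Finset ι) {u : ι → ℕ}
    (hu : ∀ t ∈ T, u t ∈ Nat.smoothNumbers (y + 1)) :
    ∫ ω, ‖∑ t ∈ T, steinhausF y ω (u t)‖ ^ 2 ∂steinhausMeasure y =
      ∑ s ∈ T, (#{t ∈ T | u s = u t} : ℝ) := by
  have hexpand (ω : Fin (y + 1) → ℝ) : ((‖∑ t ∈ T, steinhausF y ω (u t)‖ ^ 2 : ℝ) : ℂ) =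
      ∑ s ∈ T, ∑ t ∈ T, steinhausF y ω (u s) * (starRingEnd ℂ) (steinhausF y ω (u t)) := by
    rw [← sum_mul_sum, ← map_sum, Complex.mul_conj, Complex.normSq_eq_norm_sq]
  have hint (s t : ι) : Integrable (fun ω => steinhausF y ω (u s) *
      (starRingEnd ℂ) (steinhausF y ω (u t))) (steinhausMeasure y) :=
    integrable_steinhausMeasure_of_continuous (by fun_prop)
  apply Complex.ofReal_injective
  rw [← integral_complex_ofReal]
  simp only [hexpand]
  rw [integral_finsetSum _ fun s _ => integrable_finsetSum _ fun t _ => hint s t]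
  push_cast [card_filter]
  refine sum_congr rfl fun s hs => ?_
  rw [integral_finsetSum _ fun t _ => hint s t]
  refine sum_congr rfl fun t ht => ?_
  rw [integral_steinhausF_mul_conj (hu s hs) (hu t ht)]
  split_ifs <;> simp

lemma integral_sq_sum_norm_sq_sum_steinhausF {α β : Type*} {y : ℕ} (I : Finset α)
    (T : α → Finset β) {u : β → ℕ} (hu : ∀ x ∈ I, ∀ a ∈ T x, u a ∈ Nat.smoothNumbers (y + 1)) :
    ∫ ω, (∑ x ∈ I, ‖∑ a ∈ T x, steinhausF y ω (u a)‖ ^ 2) ^ 2 ∂steinhausMeasure y =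
      ∑ r ∈ I.sigma T ×ˢ I.sigma T,
        (#{s ∈ T r.1.1 ×ˢ T r.2.1 | u r.1.2 * u r.2.2 = u s.1 * u s.2} : ℝ) := by
  have hprod {ω : Fin (y + 1) → ℝ} {x z : α} (hx : x ∈ I) (hz : z ∈ I) :
      ‖∑ a ∈ T x, steinhausF y ω (u a)‖ ^ 2 * ‖∑ b ∈ T z, steinhausF y ω (u b)‖ ^ 2 =
        ‖∑ s ∈ T x ×ˢ T z, steinhausF y ω (u s.1 * u s.2)‖ ^ 2 := by
    rw [← mul_pow, ← norm_mul, sum_mul_sum, ← sum_product']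
    congr 2
    refine sum_congr rfl fun s hs => (steinhausF_mul y ω ?_ ?_).symm
    · exact Nat.ne_zero_of_mem_smoothNumbers (hu x hx _ (mem_product.mp hs).1)
    · exact Nat.ne_zero_of_mem_smoothNumbers (hu z hz _ (mem_product.mp hs).2)
  have hexpand (ω : Fin (y + 1) → ℝ) :
      (∑ x ∈ I, ‖∑ a ∈ T x, steinhausF y ω (u a)‖ ^ 2) ^ 2 =
        ∑ x ∈ I, ∑ z ∈ I, ‖∑ s ∈ T x ×ˢ T z, steinhausF y ω (u s.1 * u s.2)‖ ^ 2 := by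
    rw [sq, sum_mul_sum]
    exact sum_congr rfl fun x hx => sum_congr rfl fun z hz => hprod hx hz
  simp only [hexpand]
  rw [integral_finsetSum _ fun _ _ => integrable_steinhausMeasure_of_continuous (by fun_prop)]
  rw [sum_product, sum_sigma]
  refine sum_congr rfl fun x hx => ?_
  rw [integral_finsetSum _ fun _ _ => integrable_steinhausMeasure_of_continuous (by fun_prop)]
  simp only [sum_sigma]
  rw [sum_comm]
  refine sum_congr rfl fun z hz => ?_
  rw [integral_norm_sq_sum_steinhausF _ fun s hs => Nat.mul_mem_smoothNumbers
    (hu x hx _ (mem_product.mp hs).1) (hu z hz _ (mem_product.mp hs).2), sum_product]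

/-! ### Moments of short sums -/

lemma prod_mem_smoothNumbers_of_mem_shortTuples {k H x N : ℕ} {a : Fin k → ℕ}
    (ha : a ∈ shortTuples k H x) (hN : x + H < N) : ∏ i, a i ∈ Nat.smoothNumbers N := by
  refine prod_induction _ (· ∈ Nat.smoothNumbers N) (fun _ _ => Nat.mul_mem_smoothNumbers) ?_
    fun i _ => ?_
  · exact Nat.mem_smoothNumbers'.mpr fun p hp h1 => (hp.one_lt.ne' (Nat.dvd_one.mp h1)).elim
  · exact Nat.mem_smoothNumbers_of_lt (pos_of_mem_shortTuples ha i)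
      ((mem_Ioc.mp (mem_shortTuples.mp ha i)).2.trans_lt hN)

lemma norm_AHf_pow (k X : ℕ) (H : ℕ → ℕ) (ω : Fin (X + H X + 1) → ℝ) (x : ℕ) :
    ‖AHf X H ω x‖ ^ (2 * k) = ((H X : ℝ) ^ k)⁻¹ *
      ‖∑ a ∈ shortTuples k (H X) x, steinhausF (X + H X) ω (∏ i, a i)‖ ^ 2 := by
  have hpow : ∑ a ∈ shortTuples k (H X) x, steinhausF (X + H X) ω (∏ i, a i) =
      (∑ n ∈ Ioc x (x + H X), steinhausF (X + H X) ω n) ^ k := by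
    rw [← sum_shortTuples_prod]
    exact sum_congr rfl fun a ha =>
      steinhausF_prod _ _ _ fun i _ => (pos_of_mem_shortTuples ha i).ne'
  rw [hpow, AHf, norm_mul, mul_pow, norm_inv, Complex.norm_real, Real.norm_eq_abs,
    abs_of_nonneg (Real.sqrt_nonneg _), inv_pow, pow_mul √_, Real.sq_sqrt (Nat.cast_nonneg _),
    norm_pow, ← pow_mul, mul_comm k]

lemma mean_norm_AHf_pow (k X : ℕ) (H : ℕ → ℕ) (ω : Fin (X + H X + 1) → ℝ) :
    (1 / (X : ℝ)) * ∑ x ∈ Icc 1 X, ‖AHf X H ω x‖ ^ (2 * k) = (X * (H X : ℝ) ^ k)⁻¹ *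
      ∑ x ∈ Icc 1 X,
        ‖∑ a ∈ shortTuples k (H X) x, steinhausF (X + H X) ω (∏ i, a i)‖ ^ 2 := by
  simp only [norm_AHf_pow, ← mul_sum]
  rw [one_div, mul_inv, mul_assoc]

lemma continuous_mean_norm_AHf_pow (k X : ℕ) (H : ℕ → ℕ) :
    Continuous fun ω => (1 / (X : ℝ)) * ∑ x ∈ Icc 1 X, ‖AHf X H ω x‖ ^ (2 * k) := by
  simp only [mean_norm_AHf_pow]
  fun_prop

lemma factorial_mul_descFactorial_div_le_integral_mean_norm_AHf_pow (k : ℕ) {X : ℕ} (hX : X ≠ 0)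
    (H : ℕ → ℕ) :
    (k.factorial : ℝ) * ((H X).descFactorial k / (H X : ℝ) ^ k) ≤
      ∫ ω, (1 / (X : ℝ)) * ∑ x ∈ Icc 1 X, ‖AHf X H ω x‖ ^ (2 * k) ∂steinhausMeasure (X + H X) := by
  have hterm : ∀ x ∈ Icc 1 X, (k.factorial * (H X).descFactorial k : ℝ) ≤
      ∫ ω, ‖∑ a ∈ shortTuples k (H X) x, steinhausF (X + H X) ω (∏ i, a i)‖ ^ 2
        ∂steinhausMeasure (X + H X) := fun x hx => by
    have hcount := factorial_mul_descFactorial_le_sum_card_prod_eq (ι := Fin k) (Ioc x (x + H X))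
    rw [Fintype.card_fin, Nat.card_Ioc, Nat.add_sub_cancel_left] at hcount
    rw [integral_norm_sq_sum_steinhausF _ fun a ha =>
      prod_mem_smoothNumbers_of_mem_shortTuples ha
        (Nat.lt_succ_of_le (Nat.add_le_add_right (mem_Icc.mp hx).2 _))]
    exact_mod_cast hcount
  simp only [mean_norm_AHf_pow]
  rw [integral_const_mul, integral_finsetSum _ fun x _ =>
    integrable_steinhausMeasure_of_continuous (by fun_prop)]
  calc (k.factorial : ℝ) * ((H X).descFactorial k / (H X : ℝ) ^ k)
      = (X * (H X : ℝ) ^ k)⁻¹ * ∑ _x ∈ Icc 1 X, (k.factorial * (H X).descFactorial k : ℝ) := by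
        rw [sum_const, Nat.card_Icc, Nat.add_sub_cancel, nsmul_eq_mul]
        field_simp
    _ ≤ (X * (H X : ℝ) ^ k)⁻¹ * ∑ x ∈ Icc 1 X,
          ∫ ω, ‖∑ a ∈ shortTuples k (H X) x, steinhausF (X + H X) ω (∏ i, a i)‖ ^ 2
            ∂steinhausMeasure (X + H X) := by
        gcongr with x hx
        exact hterm x hx

lemma integral_sq_mean_norm_AHf_pow_le (k : ℕ) {X : ℕ} {H : ℕ → ℕ} (hH : 1 ≤ H X) (hHX : H X ≤ X) :
    ∫ ω, ((1 / (X : ℝ)) * ∑ x ∈ Icc 1 X, ‖AHf X H ω x‖ ^ (2 * k)) ^ 2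
        ∂steinhausMeasure (X + H X) ≤
      (k.factorial : ℝ) ^ 2 +
        √(2 ^ (k + 4) * (H X / X * (1 + Real.log (2 * X)) ^ logExponent k)) := by
  have hX : 0 < X := by lia
  simp only [mean_norm_AHf_pow, mul_pow _ _ 2]
  rw [integral_const_mul, integral_sq_sum_norm_sq_sum_steinhausF _ _ fun _ hx _ ha =>
    prod_mem_smoothNumbers_of_mem_shortTuples ha
      (Nat.lt_succ_of_le (Nat.add_le_add_right (mem_Icc.mp hx).2 _)), inv_pow,
    inv_mul_le_iff₀ (by positivity)]
  exact sum_coincidenceCount_le hH hHX k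

lemma integral_sub_const_sq {Ω : Type*} [MeasurableSpace Ω] {μ : Measure Ω}
    [IsProbabilityMeasure μ] {f : Ω → ℝ} (hf : Integrable f μ)
    (hf2 : Integrable (fun ω => f ω ^ 2) μ) (c : ℝ) :
    ∫ ω, (f ω - c) ^ 2 ∂μ = (∫ ω, f ω ^ 2 ∂μ) - 2 * c * (∫ ω, f ω ∂μ) + c ^ 2 := by
  have hexpand (ω : Ω) : (f ω - c) ^ 2 = f ω ^ 2 - 2 * c * f ω + c ^ 2 := by ring
  have hint : Integrable (fun ω => f ω ^ 2 - 2 * c * f ω) μ := hf2.sub (hf.const_mul _)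
  simp only [hexpand]
  rw [integral_add hint (integrable_const _),
    integral_sub hf2 (hf.const_mul _), integral_const_mul, integral_const, probReal_univ, one_smul]

lemma integral_sq_mean_norm_AHf_pow_sub_factorial_le (k : ℕ) {X : ℕ} {H : ℕ → ℕ} (hH : 1 ≤ H X)
    (hHX : H X ≤ X) :
    ∫ ω, ((1 / (X : ℝ)) * ∑ x ∈ Icc 1 X, ‖AHf X H ω x‖ ^ (2 * k) - (k.factorial : ℝ)) ^ 2
        ∂steinhausMeasure (X + H X) ≤
      √(2 ^ (k + 4) * (H X / X * (1 + Real.log (2 * X)) ^ logExponent k)) +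
        2 * (k.factorial : ℝ) ^ 2 * (1 - (H X).descFactorial k / (H X : ℝ) ^ k) := by
  have hcont := continuous_mean_norm_AHf_pow k X H
  have hfirst := mul_le_mul_of_nonneg_left
    (factorial_mul_descFactorial_div_le_integral_mean_norm_AHf_pow k (by lia : X ≠ 0) H)
    (by positivity : 0 ≤ 2 * (k.factorial : ℝ))
  have hsecond := integral_sq_mean_norm_AHf_pow_le k hH hHX
  rw [integral_sub_const_sq (integrable_steinhausMeasure_of_continuous hcont)
    (integrable_steinhausMeasure_of_continuous (hcont.pow 2))]
  linarith

lemma tendsto_descFactorial_div_pow (k : ℕ) :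
    Filter.Tendsto (fun n : ℕ => (n.descFactorial k : ℝ) / (n : ℝ) ^ k) Filter.atTop (nhds 1) :=
  (Asymptotics.isEquivalent_iff_tendsto_one
    ((Filter.eventually_gt_atTop 0).mono fun n hn => by positivity)).mp
    (isEquivalent_descFactorial k)

lemma tendsto_log_natCast_atTop :
    Filter.Tendsto (fun n : ℕ => Real.log n) Filter.atTop Filter.atTop :=
  Real.tendsto_log_atTop.comp tendsto_natCast_atTop_atTop

lemma eventually_le_of_le_mul_log_rpow {H : ℕ → ℕ} {c : ℝ} (hc : 0 ≤ c)
    (hH : ∀ᶠ X : ℕ in Filter.atTop, (H X : ℝ) ≤ X * Real.log X ^ (-c)) :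
    ∀ᶠ X in Filter.atTop, H X ≤ X := by
  filter_upwards [hH, tendsto_log_natCast_atTop.eventually_ge_atTop 1] with X hX hlog
  exact_mod_cast hX.trans (mul_le_of_le_one_right X.cast_nonneg
    (Real.rpow_le_one_of_one_le_of_nonpos hlog (neg_nonpos.mpr hc)))

lemma tendsto_div_mul_log_pow {H : ℕ → ℕ} (E : ℕ)
    (hH : ∀ᶠ X : ℕ in Filter.atTop, (H X : ℝ) ≤ X * Real.log X ^ (-((E + 1 : ℕ) : ℝ))) :
    Filter.Tendsto (fun X : ℕ => (H X / X : ℝ) * (1 + Real.log (2 * X)) ^ E)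
      Filter.atTop (nhds 0) := by
  refine squeeze_zero' (g := fun X : ℕ => 3 ^ E / Real.log X) ?_ ?_
    (tendsto_log_natCast_atTop.const_div_atTop _)
  · refine .of_forall fun X => ?_
    have := log_two_mul_natCast_nonneg X
    positivity
  filter_upwards [hH, tendsto_log_natCast_atTop.eventually_ge_atTop 1,
    Filter.eventually_ge_atTop 1] with X hHX hlog hX
  have hX0 : (0 : ℝ) < X := mod_cast hX
  have hlog2 := log_two_mul_natCast_nonneg X
  have hlog3 : 1 + Real.log (2 * X) ≤ 3 * Real.log X := by
    rw [Real.log_mul two_ne_zero hX0.ne']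
    linarith [Real.log_two_lt_d9]
  rw [Real.rpow_neg (by linarith), Real.rpow_natCast] at hHX
  calc (H X / X : ℝ) * (1 + Real.log (2 * X)) ^ E
      ≤ (Real.log X ^ (E + 1))⁻¹ * (3 * Real.log X) ^ E := by
        gcongr
        rwa [div_le_iff₀' hX0]
    _ = 3 ^ E / Real.log X := by
        have : Real.log X ≠ 0 := by linarith
        field_simp
        ring

end

/-- for every `k ≥ 1` there is `c_k > 0` such that for every
`H : ℕ → ℕ` with `H(X) → ∞` and `H(X) ≤ X·(log X)^{−c_k}` for all large `X`,
`𝔼_f ((1/X) ∑_{x=1}^{X} |A_H(f,x)|^{2k} − k!)² → 0` as `X → ∞`. -/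
theorem stmt2 (k : ℕ) (hk : 1 ≤ k) :
    ∃ c : ℝ, 0 < c ∧ ∀ H : ℕ → ℕ,
      Filter.Tendsto H Filter.atTop Filter.atTop →
      (∀ᶠ X in Filter.atTop, (H X : ℝ) ≤ (X : ℝ) * Real.log X ^ (-c)) →
      Filter.Tendsto (fun X : ℕ =>
        ∫ ω, ((1 / (X : ℝ)) * ∑ x ∈ Finset.Icc 1 X, ‖AHf X H ω x‖ ^ (2 * k)
            - (k.factorial : ℝ)) ^ 2 ∂(steinhausMeasure (X + H X)))
        Filter.atTop (nhds 0) := by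
  refine ⟨((logExponent k + 1 : ℕ) : ℝ), by positivity, fun H hHtop hH => ?_⟩
  have hHX : ∀ᶠ X in Filter.atTop, 1 ≤ H X ∧ H X ≤ X :=
    (hHtop.eventually_ge_atTop 1).and (eventually_le_of_le_mul_log_rpow (Nat.cast_nonneg _) hH)
  have hsqrt := ((tendsto_div_mul_log_pow _ hH).const_mul ((2 : ℝ) ^ (k + 4))).sqrt
  have hdesc := (((tendsto_descFactorial_div_pow k).comp hHtop).const_sub 1).const_mul
    (2 * (k.factorial : ℝ) ^ 2)
  refine squeeze_zero' (.of_forall fun X => integral_nonneg fun ω => sq_nonneg _)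
    (hHX.mono fun X hX => integral_sq_mean_norm_AHf_pow_sub_factorial_le k hX.1 hX.2) ?_
  simpa using hsqrt.add hdesc
end

section
/- For every integer k ≥ 2 there exists a constant C_k > 0 such that for all integers V₁, U₂, q ≥ 1 with q ≤ U₂^{k−2} and every sign ε₁ ∈ {−1, 1}: ∑ τ_k(u₂)·τ_k(ε₁v₁ + u₂q) ≤ C_k · V₁U₂ · (1 + log(V₁U₂))^{3k}, where the sum runs over integers u₂ with U₂ ≤ u₂ < 2U₂ and integers v₁ with 1 ≤ v₁ ≤ V₁, and log denotes the natural logarithm. -/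
/-- `τ_k(m)` for `m : ℤ`: the number of `k`-tuples of positive integers with
product `m`; in particular `τ_k(m) = 0` for `m ≤ 0`. -/
noncomputable def tauInt (k : ℕ) (m : ℤ) : ℕ :=
  Nat.card {d : Fin k → ℤ // (∀ i, 0 < d i) ∧ ∏ i, d i = m}

/-!
The function `τ_k` is majorized by a short divisor sum: if `n ≤ (2 z) ^ B`, then `τ_k(n)` is at most
a sum over the divisors `d ≤ z` of `n`. Indeed, multiply the prime factors of `n` together in
increasing order for as long as the product `a` stays at most `z`. If the process stops at a prime
`p ≈ z ^ (1 / s)`, then `n / a` has only `O(s)` prime factors, so `τ_k(n) ≤ k ^ O(s) * τ_k(a)`.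
Here `a` has no prime factor exceeding `z ^ (1 / s)`, and `a > √z` once `s ≥ 2`, so the factor
`k ^ O(s)` is at most `a ^ (O(s) / log z)` (Rankin's trick). The resulting weights `g` satisfy
`∑ g(d) / d ≪ (log z) ^ k` by an Euler product and Mertens' estimate. When `z ^ (1 / s)` is bounded,
the divisor bound `τ_k(n) ≪ n ^ δ` is enough.

Majorizing both values of `τ_k` in this way, with `d ≤ √U` and `e ≤ √(max U V)`, reduces the theorem
to counting the pairs `(u, v)` with `d ∣ u` and `e ∣ ε v + u q`, of which there are
`O(U V / (d e))`.
-/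

section

open Finset ArithmeticFunction
open scoped ArithmeticFunction.Omega

/-! ### The divisor functions -/

/-- The divisor function `τ_k` on `ℕ`: the number of ordered factorizations of `n` into `k`
factors, with the value `0` at `n = 0`. -/
def tauNat (k n : ℕ) : ℕ := #(Nat.finMulAntidiag k n)

lemma tauInt_natCast (k : ℕ) {n : ℕ} (hn : n ≠ 0) : tauInt k n = tauNat k n := by
  rw [tauInt, tauNat, ← Fintype.card_coe, ← Nat.card_eq_fintype_card]
  refine Nat.card_congr
    { toFun := fun d ↦ ⟨fun i ↦ (d.1 i).toNat, Nat.mem_finMulAntidiag.2 ⟨?_, hn⟩⟩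
      invFun := fun t ↦ ⟨fun i ↦ t.1 i, fun i ↦ ?_, ?_⟩
      left_inv := fun d ↦ Subtype.ext <| funext fun i ↦ Int.toNat_of_nonneg (d.2.1 i).le
      right_inv := fun t ↦ Subtype.ext <| funext fun i ↦ Int.toNat_natCast _ }
  · zify
    exact (prod_congr rfl fun i _ ↦ Int.toNat_of_nonneg (d.2.1 i).le).trans d.2.2
  · exact Int.natCast_pos.2 (Nat.pos_of_ne_zero (Nat.ne_zero_of_mem_finMulAntidiag t.2 i))
  · exact (Nat.cast_prod _ _).symm.trans (congrArg _ (Nat.prod_eq_of_mem_finMulAntidiag t.2))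

lemma tauInt_of_nonpos (k : ℕ) {m : ℤ} (hm : m ≤ 0) : tauInt k m = 0 :=
  have : IsEmpty {d : Fin k → ℤ // (∀ i, 0 < d i) ∧ ∏ i, d i = m} :=
    ⟨fun ⟨_, hd, h⟩ ↦ (h ▸ hm).not_gt (prod_pos fun i _ ↦ hd i)⟩
  Nat.card_of_isEmpty

lemma finMulAntidiag_mul_prime_subset (k : ℕ) {m p : ℕ} (hm : m ≠ 0) (hp : p.Prime) :
    Nat.finMulAntidiag k (m * p) ⊆ univ.biUnion fun i : Fin k ↦
      (Nat.finMulAntidiag k m).image fun t ↦ Function.update t i (t i * p) := by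
  intro t ht
  have hprod : ∏ i, t i = m * p := Nat.prod_eq_of_mem_finMulAntidiag ht
  obtain ⟨i, -, c, hc⟩ := (hp.prime.dvd_finsetProd_iff _).1 (hprod ▸ Dvd.intro_left m rfl)
  refine mem_biUnion.2 ⟨i, mem_univ i, mem_image.2 ⟨Function.update t i c, ?_, ?_⟩⟩
  · refine Nat.mem_finMulAntidiag.2 ⟨Nat.eq_of_mul_eq_mul_right hp.pos ?_, hm⟩
    rw [prod_update_of_mem (mem_univ i), ← hprod, ← mul_prod_erase _ _ (mem_univ i), hc,
      sdiff_singleton_eq_erase]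
    ring
  · rw [Function.update_self, Function.update_idem, mul_comm, ← hc, Function.update_eq_self]

lemma tauNat_mul_prime_le (k : ℕ) {m p : ℕ} (hm : m ≠ 0) (hp : p.Prime) :
    tauNat k (m * p) ≤ k * tauNat k m := by
  refine (card_le_card (finMulAntidiag_mul_prime_subset k hm hp)).trans ?_
  exact (card_biUnion_le_card_mul _ _ (tauNat k m) fun _ _ ↦ card_image_le).trans_eq
    (by rw [card_univ, Fintype.card_fin])

lemma tauNat_mul_le_pow_cardFactors (k a : ℕ) {b : ℕ} (hb : b ≠ 0) :
    tauNat k (a * b) ≤ k ^ Ω b * tauNat k a := by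
  rcases eq_or_ne a 0 with rfl | ha
  · simp [tauNat]
  induction b using induction_on_primes with
  | zero => contradiction
  | one => simp
  | prime_mul p b hp ih =>
    have hb : b ≠ 0 := right_ne_zero_of_mul hb
    calc tauNat k (a * (p * b)) = tauNat k (a * b * p) := by congr 1; ring
      _ ≤ k * tauNat k (a * b) := tauNat_mul_prime_le k (mul_ne_zero ha hb) hp
      _ ≤ k * (k ^ Ω b * tauNat k a) := Nat.mul_le_mul_left k (ih hb)
      _ = k ^ Ω (p * b) * tauNat k a := by
        rw [cardFactors_mul hp.ne_zero hb, cardFactors_apply_prime hp]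
        ring

lemma pow_cardFactors_le {b p : ℕ} (hb : b ≠ 0) (h : ∀ q, q.Prime → q ∣ b → p ≤ q) :
    p ^ Ω b ≤ b := by
  rw [cardFactors_apply]
  exact (List.pow_card_le_prod _ _ fun q hq ↦ h q (Nat.prime_of_mem_primeFactorsList hq)
    (Nat.dvd_of_mem_primeFactorsList hq)).trans_eq (Nat.prod_primeFactorsList hb)

lemma sum_tauNat_mul_le_pow_sum {R : Type*} [CommSemiring R] [PartialOrder R] [IsOrderedRing R]
    (f : ℕ →* R) (hf : ∀ n, 0 ≤ f n) (k : ℕ) {D T : Finset ℕ}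
    (hDT : ∀ d ∈ D, ∀ m, m ∣ d → m ∈ T) :
    ∑ d ∈ D, tauNat k d * f d ≤ (∑ m ∈ T, f m) ^ k := by
  have hexpand (d : ℕ) : tauNat k d * f d = ∑ x ∈ Nat.finMulAntidiag k d, ∏ i, f (x i) := by
    rw [tauNat, ← nsmul_eq_mul, ← sum_const]
    refine sum_congr rfl fun x hx ↦ ?_
    rw [← map_prod, Nat.prod_eq_of_mem_finMulAntidiag hx]
  have hdisj : (D : Set ℕ).PairwiseDisjoint (Nat.finMulAntidiag k) := fun d _ e _ hde ↦
    disjoint_left.2 fun x hx hx' ↦ hde <|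
      (Nat.prod_eq_of_mem_finMulAntidiag hx).symm.trans (Nat.prod_eq_of_mem_finMulAntidiag hx')
  calc ∑ d ∈ D, tauNat k d * f d = ∑ x ∈ D.biUnion (Nat.finMulAntidiag k), ∏ i, f (x i) := by
        rw [sum_biUnion hdisj]
        exact sum_congr rfl fun d _ ↦ hexpand d
    _ ≤ ∑ x ∈ Fintype.piFinset fun _ : Fin k ↦ T, ∏ i, f (x i) := by
        refine sum_le_sum_of_subset_of_nonneg (fun x hx ↦ ?_) fun x _ _ ↦ prod_nonneg fun i _ ↦ hf _
        obtain ⟨d, hd, hx⟩ := mem_biUnion.1 hx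
        exact Fintype.mem_piFinset.2 fun i ↦ hDT d hd _ (Nat.dvd_of_mem_finMulAntidiag hx i)
    _ = (∑ m ∈ T, f m) ^ k := by
        rw [← prod_univ_sum (fun _ : Fin k ↦ T) fun _ ↦ f, prod_const, card_univ, Fintype.card_fin]

/-! ### Sums over smooth numbers -/

/-- The completely multiplicative function `n ↦ n ^ s` on `ℕ`, bundled so that the Euler product
lemmas of the library apply to it. -/
noncomputable def natRpowHom (s : ℝ) : ℕ →* ℝ where
  toFun n := (n : ℝ) ^ s
  map_one' := by rw [Nat.cast_one, Real.one_rpow]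
  map_mul' m n := by rw [Nat.cast_mul, Real.mul_rpow m.cast_nonneg n.cast_nonneg]

lemma hasSum_smoothNumbers_rpow {s : ℝ} (hs : s < 0) (N : ℕ) :
    HasSum (fun m : N.smoothNumbers ↦ ((m : ℕ) : ℝ) ^ s)
      (∏ p ∈ N.primesBelow, (1 - (p : ℝ) ^ s)⁻¹) := by
  refine (EulerProduct.summable_and_hasSum_smoothNumbers_prod_primesBelow_geometric
    (f := natRpowHom s) (fun {p} hp ↦ ?_) N).2
  exact (Real.norm_of_nonneg (Real.rpow_nonneg p.cast_nonneg s)).trans_lt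
    (Real.rpow_lt_one_of_one_lt_of_neg (by exact_mod_cast hp.one_lt) hs)

lemma sum_rpow_le_prod_primesBelow {s : ℝ} (hs : s < 0) {N : ℕ} {T : Finset ℕ}
    (hT : ∀ m ∈ T, m ∈ N.smoothNumbers) :
    ∑ m ∈ T, (m : ℝ) ^ s ≤ ∏ p ∈ N.primesBelow, (1 - (p : ℝ) ^ s)⁻¹ := by
  rw [← sum_subtype_of_mem (fun m : ℕ ↦ (m : ℝ) ^ s) hT]
  exact sum_le_hasSum _ (fun m _ ↦ Real.rpow_nonneg (Nat.cast_nonneg _) _)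
    (hasSum_smoothNumbers_rpow hs N)

lemma inv_one_sub_rpow_pos {s : ℝ} (hs : s < 0) {N p : ℕ} (hp : p ∈ N.primesBelow) :
    0 < (1 - (p : ℝ) ^ s)⁻¹ :=
  inv_pos.2 <| sub_pos.2 <| Real.rpow_lt_one_of_one_lt_of_neg
    (by exact_mod_cast (Nat.prime_of_mem_primesBelow hp).one_lt) hs

lemma tsum_rpow_le_one_add_one_div {δ : ℝ} (hδ : 0 < δ) :
    ∑' n : ℕ, (n : ℝ) ^ (-1 - δ) ≤ 1 + 1 / δ := by
  have hsum : Summable fun n : ℕ ↦ (n : ℝ) ^ (-1 - δ) :=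
    Real.summable_nat_rpow.2 (by linarith)
  have hzeta := ZetaAsymptotics.zeta_limit_aux1 (lt_add_of_pos_right 1 hδ)
  have hterm : 0 ≤ ZetaAsymptotics.termTSum (1 + δ) :=
    tsum_nonneg fun n ↦ ZetaAsymptotics.term_nonneg (n + 1) _
  have hshift (n : ℕ) : ((n + 1 : ℕ) : ℝ) ^ (-1 - δ) = 1 / ((n : ℝ) + 1) ^ (1 + δ) := by
    rw [← neg_add', Real.rpow_neg (Nat.cast_nonneg _), Nat.cast_succ, one_div]
  rw [hsum.tsum_eq_zero_add, Nat.cast_zero, Real.zero_rpow (by linarith), zero_add]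
  simp only [hshift]
  rw [add_sub_cancel_left] at hzeta
  nlinarith

lemma prod_primesBelow_inv_one_sub_rpow_le {δ : ℝ} (hδ : 0 < δ) (N : ℕ) :
    ∏ p ∈ N.primesBelow, (1 - (p : ℝ) ^ (-1 - δ))⁻¹ ≤ 1 + 1 / δ := by
  have hsum : Summable fun n : ℕ ↦ (n : ℝ) ^ (-1 - δ) :=
    Real.summable_nat_rpow.2 (by linarith)
  rw [← (hasSum_smoothNumbers_rpow (by linarith) N).tsum_eq]
  exact (Summable.tsum_subtype_le _ _ (fun n ↦ Real.rpow_nonneg n.cast_nonneg _) hsum).trans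
    (tsum_rpow_le_one_add_one_div hδ)

lemma natCast_le_two_mul_natCast_div_mul {n N : ℕ} (hn : 0 < n) (hnN : n ≤ N) :
    (N : ℝ) ≤ 2 * (N / n : ℕ) * n := by
  have hmod : N < n * (N / n) + n := Nat.lt_mul_div_succ N hn
  have hdiv : n * 1 ≤ n * (N / n) := Nat.mul_le_mul_left n (Nat.div_pos hnN hn)
  have h : N ≤ 2 * (N / n) * n := by linarith
  exact_mod_cast h

lemma sum_vonMangoldt_div_le (N : ℕ) : ∑ n ∈ Ioc 0 N, Λ n / n ≤ 2 * Real.log N := by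
  rcases N.eq_zero_or_pos with rfl | hN
  · simp
  have hN0 : (0 : ℝ) < N := by exact_mod_cast hN
  refine le_of_mul_le_mul_left ?_ hN0
  calc N * ∑ n ∈ Ioc 0 N, Λ n / n ≤ ∑ n ∈ Ioc 0 N, 2 * (Λ n * (N / n : ℕ)) := by
        rw [mul_sum]
        refine sum_le_sum fun n hn ↦ ?_
        obtain ⟨hn, hnN⟩ := mem_Ioc.1 hn
        have hn0 : (0 : ℝ) < n := by exact_mod_cast hn
        rw [mul_div_left_comm, mul_left_comm]
        refine mul_le_mul_of_nonneg_left ?_ vonMangoldt_nonneg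
        exact (div_le_iff₀ hn0).2 (natCast_le_two_mul_natCast_div_mul hn hnN)
    _ = 2 * ∑ n ∈ Ioc 0 N, Real.log n := by
        rw [← mul_sum, ← sum_Ioc_mul_zeta_eq_sum, vonMangoldt_mul_zeta]
        rfl
    _ ≤ 2 * ∑ _n ∈ Ioc 0 N, Real.log N := by
        gcongr with n hn
        · exact_mod_cast (mem_Ioc.1 hn).1
        · exact (mem_Ioc.1 hn).2
    _ = N * (2 * Real.log N) := by
        rw [sum_const, Nat.card_Ioc, nsmul_eq_mul, Nat.sub_zero]
        ring

lemma sum_primesBelow_log_div_le (N : ℕ) :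
    ∑ p ∈ (N + 1).primesBelow, Real.log p / p ≤ 2 * Real.log N := by
  refine le_trans ?_ (sum_vonMangoldt_div_le N)
  calc ∑ p ∈ (N + 1).primesBelow, Real.log p / p = ∑ p ∈ (N + 1).primesBelow, Λ p / p :=
        sum_congr rfl fun p hp ↦ by
          rw [vonMangoldt_apply_prime (Nat.prime_of_mem_primesBelow hp)]
    _ ≤ ∑ n ∈ Ioc 0 N, Λ n / n := by
        refine sum_le_sum_of_subset_of_nonneg (fun p hp ↦ mem_Ioc.2 ⟨?_, ?_⟩) fun n _ _ ↦
          div_nonneg vonMangoldt_nonneg n.cast_nonneg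
        · exact (Nat.prime_of_mem_primesBelow hp).pos
        · exact Nat.lt_succ_iff.1 (Nat.lt_of_mem_primesBelow hp)

lemma exp_le_one_add_mul_exp {w A : ℝ} (hw : 0 ≤ w) (hwA : w ≤ A) :
    Real.exp w ≤ 1 + w * Real.exp A := by
  have hneg : (1 - w) * Real.exp w ≤ 1 := by
    calc (1 - w) * Real.exp w ≤ Real.exp (-w) * Real.exp w :=
          mul_le_mul_of_nonneg_right (Real.one_sub_le_exp_neg w) (Real.exp_pos w).le
      _ = 1 := by rw [← Real.exp_add, neg_add_cancel, Real.exp_zero]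
  have hmono : w * Real.exp w ≤ w * Real.exp A := by gcongr
  linarith

lemma rpow_sub_rpow_neg_le {A L x : ℝ} (hA : 0 ≤ A) (hL : 0 < L) (hx : 1 ≤ x)
    (hxL : Real.log x ≤ L) :
    x ^ (A / L) - x ^ (-(1 / L)) ≤ (A * Real.exp A + 1) * (Real.log x / L) := by
  have hx0 : 0 < x := by linarith
  have ht0 : 0 ≤ Real.log x / L := div_nonneg (Real.log_nonneg hx) hL.le
  have ht1 : Real.log x / L ≤ 1 := (div_le_one hL).2 hxL
  have hup := exp_le_one_add_mul_exp (mul_nonneg hA ht0) (mul_le_of_le_one_right hA ht1)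
  have hlow := Real.one_sub_le_exp_neg (Real.log x / L)
  calc x ^ (A / L) - x ^ (-(1 / L))
      = Real.exp (A * (Real.log x / L)) - Real.exp (-(Real.log x / L)) := by
        rw [Real.rpow_def_of_pos hx0, Real.rpow_def_of_pos hx0]
        ring_nf
    _ ≤ (A * Real.exp A + 1) * (Real.log x / L) := by linarith

lemma rpow_le_three_fourths {x s : ℝ} (hx : 2 ≤ x) (hs : s ≤ -(1 / 2)) : x ^ s ≤ 3 / 4 :=
  calc x ^ s ≤ x ^ (-(1 / 2) : ℝ) := Real.rpow_le_rpow_of_exponent_le (by linarith) hs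
    _ ≤ 2 ^ (-(1 / 2) : ℝ) := Real.rpow_le_rpow_of_nonpos two_pos hx (by norm_num)
    _ = (√2)⁻¹ := by rw [Real.rpow_neg zero_le_two, Real.sqrt_eq_rpow]
    _ ≤ 3 / 4 := by
      rw [inv_le_comm₀ (by positivity) (by norm_num)]
      exact Real.le_sqrt_of_sq_le (by norm_num)

lemma inv_one_sub_le_mul_exp {x y : ℝ} (hyx : y ≤ x) (hx : x ≤ 3 / 4) :
    (1 - x)⁻¹ ≤ (1 - y)⁻¹ * Real.exp (4 * (x - y)) := by
  have hx1 : 0 < 1 - x := by linarith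
  have hy1 : 0 < 1 - y := by linarith
  rw [inv_mul_eq_div, inv_eq_one_div, div_le_div_iff₀ hx1 hy1, one_mul]
  calc 1 - y ≤ (4 * (x - y) + 1) * (1 - x) := by nlinarith
    _ ≤ Real.exp (4 * (x - y)) * (1 - x) :=
      mul_le_mul_of_nonneg_right (Real.add_one_le_exp _) hx1.le

lemma inv_one_sub_rpow_le_mul_exp {A L x : ℝ} (hA : 0 ≤ A) (hL : 0 < L) (hAL : 4 * A ≤ L)
    (hx : 2 ≤ x) (hxL : Real.log x ≤ L) :
    (1 - x ^ (A / L - 1))⁻¹ ≤ (1 - x ^ (-1 - 1 / L))⁻¹ *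
      Real.exp (4 * (A * Real.exp A + 1) / L * (Real.log x / x)) := by
  have hx0 : 0 < x := by linarith
  have hexp : A / L - 1 ≤ -(1 / 2) := by
    linarith [(div_le_iff₀ hL).2 (show A ≤ 1 / 4 * L by linarith)]
  have hle : x ^ (-1 - 1 / L) ≤ x ^ (A / L - 1) :=
    Real.rpow_le_rpow_of_exponent_le (by linarith)
      (by linarith [div_nonneg hA hL.le, one_div_pos.2 hL])
  refine (inv_one_sub_le_mul_exp hle (rpow_le_three_fourths hx hexp)).trans ?_
  refine mul_le_mul_of_nonneg_left (Real.exp_le_exp.2 ?_)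
    (inv_nonneg.2 (by linarith [rpow_le_three_fourths hx hexp]))
  calc 4 * (x ^ (A / L - 1) - x ^ (-1 - 1 / L))
      = 4 * ((x ^ (A / L) - x ^ (-(1 / L))) / x) := by
        rw [Real.rpow_sub_one hx0.ne', ← neg_add', add_comm, neg_add', Real.rpow_sub_one hx0.ne',
          sub_div]
    _ ≤ 4 * ((A * Real.exp A + 1) * (Real.log x / L) / x) := by
        gcongr
        exact rpow_sub_rpow_neg_le hA hL (by linarith) hxL
    _ = 4 * (A * Real.exp A + 1) / L * (Real.log x / x) := by ring

lemma exists_sum_smoothNumbers_rpow_le {A : ℝ} (hA : 0 < A) : ∃ C : ℝ, 0 < C ∧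
    ∀ (N : ℕ) (L : ℝ), 4 * A ≤ L → Real.log N ≤ L → ∀ T : Finset ℕ,
      (∀ m ∈ T, m ∈ (N + 1).smoothNumbers) → ∑ m ∈ T, (m : ℝ) ^ (A / L - 1) ≤ C * (1 + L) := by
  set K := A * Real.exp A + 1
  refine ⟨Real.exp (8 * K), Real.exp_pos _, fun N L hAL hNL T hT ↦ ?_⟩
  have hL : 0 < L := by linarith
  have hs : A / L - 1 < 0 := sub_neg.2 ((div_lt_one hL).2 (by linarith))
  have hfactor : ∀ p ∈ (N + 1).primesBelow, (1 - (p : ℝ) ^ (A / L - 1))⁻¹ ≤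
      (1 - (p : ℝ) ^ (-1 - 1 / L))⁻¹ * Real.exp (4 * K / L * (Real.log p / p)) := by
    intro p hp
    have hpp := Nat.prime_of_mem_primesBelow hp
    have hpN : p ≤ N := Nat.lt_succ_iff.1 (Nat.lt_of_mem_primesBelow hp)
    refine inv_one_sub_rpow_le_mul_exp hA.le hL hAL (by exact_mod_cast hpp.two_le) (le_trans ?_ hNL)
    exact Real.log_le_log (by exact_mod_cast hpp.pos) (by exact_mod_cast hpN)
  have hmertens : 4 * K / L * ∑ p ∈ (N + 1).primesBelow, Real.log p / p ≤ 8 * K :=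
    calc _ ≤ 4 * K / L * (2 * L) := by
          gcongr
          linarith [sum_primesBelow_log_div_le N]
      _ = 8 * K := by field_simp; ring
  calc ∑ m ∈ T, (m : ℝ) ^ (A / L - 1)
      ≤ ∏ p ∈ (N + 1).primesBelow, (1 - (p : ℝ) ^ (A / L - 1))⁻¹ :=
        sum_rpow_le_prod_primesBelow hs hT
    _ ≤ (∏ p ∈ (N + 1).primesBelow, (1 - (p : ℝ) ^ (-1 - 1 / L))⁻¹) *
          Real.exp (4 * K / L * ∑ p ∈ (N + 1).primesBelow, Real.log p / p) := by
        rw [mul_sum, Real.exp_sum, ← prod_mul_distrib]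
        exact prod_le_prod (fun p hp ↦ (inv_one_sub_rpow_pos hs hp).le) hfactor
    _ ≤ (1 + 1 / (1 / L)) * Real.exp (8 * K) :=
        mul_le_mul (prod_primesBelow_inv_one_sub_rpow_le (one_div_pos.2 hL) _)
          (Real.exp_le_exp.2 hmertens) (Real.exp_pos _).le (by positivity)
    _ = Real.exp (8 * K) * (1 + L) := by rw [one_div_one_div, mul_comm]

/-! ### Reduction to small divisors -/

lemma exists_smooth_mul_rough (N : ℕ) {n : ℕ} (hn : n ≠ 0) : ∃ a b, n = a * b ∧
    a ∈ N.smoothNumbers ∧ ∀ q, q.Prime → q ∣ b → N ≤ q := by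
  refine ⟨_, (n.primeFactorsList.filter (¬ · < N)).prod, ?_, Nat.prod_mem_smoothNumbers n N,
    fun q hq hqb ↦ ?_⟩
  · simpa [Nat.prod_primeFactorsList hn] using
      (List.prod_map_filter_mul_prod_map_filter_not (· < N) id n.primeFactorsList).symm
  · have hmem := mem_list_primes_of_dvd_prod hq.prime (fun r hr ↦
      (Nat.prime_of_mem_primeFactorsList (List.mem_filter.1 hr).1).prime) hqb
    simpa using (List.mem_filter.1 hmem).2

lemma pow_cardFactors_le_rpow {x ε : ℝ} (hx : 0 ≤ x) (hε : 0 ≤ ε) {M b : ℕ} (hb : b ≠ 0)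
    (hxM : x ≤ (M : ℝ) ^ ε) (hMb : ∀ q, q.Prime → q ∣ b → M ≤ q) : x ^ Ω b ≤ (b : ℝ) ^ ε :=
  calc x ^ Ω b ≤ ((M : ℝ) ^ ε) ^ Ω b := pow_le_pow_left₀ hx hxM _
    _ = ((M ^ Ω b : ℕ) : ℝ) ^ ε := by
      rw [Nat.cast_pow, Real.rpow_pow_comm M.cast_nonneg]
    _ ≤ (b : ℝ) ^ ε := by
      gcongr
      exact pow_cardFactors_le hb hMb

lemma exists_tauNat_le_rpow_of_smooth (k N : ℕ) {ε : ℝ} (hε : 0 < ε) : ∃ C : ℝ, 0 < C ∧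
    ∀ a ∈ N.smoothNumbers, (tauNat k a : ℝ) ≤ C * (a : ℝ) ^ ε := by
  set C := ∏ p ∈ N.primesBelow, (1 - (p : ℝ) ^ (-ε))⁻¹
  have hC : 0 < C := prod_pos fun p hp ↦ inv_one_sub_rpow_pos (neg_lt_zero.2 hε) hp
  refine ⟨C ^ k, pow_pos hC k, fun a ha ↦ ?_⟩
  have ha0 : (0 : ℝ) < a := by exact_mod_cast (Nat.ne_zero_of_mem_smoothNumbers ha).bot_lt
  rw [← div_le_iff₀ (by positivity), div_eq_mul_inv, ← Real.rpow_neg ha0.le]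
  calc tauNat k a * (a : ℝ) ^ (-ε) ≤ (∑ m ∈ a.divisors, (m : ℝ) ^ (-ε)) ^ k := by
        have := sum_tauNat_mul_le_pow_sum (natRpowHom (-ε))
          (fun n ↦ Real.rpow_nonneg n.cast_nonneg _) k (D := {a}) (T := a.divisors) fun d hd m hm ↦
            Nat.mem_divisors.2 ⟨mem_singleton.1 hd ▸ hm, Nat.ne_zero_of_mem_smoothNumbers ha⟩
        rwa [sum_singleton] at this
    _ ≤ C ^ k := by
        gcongr
        exact sum_rpow_le_prod_primesBelow (neg_lt_zero.2 hε) fun m hm ↦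
          Nat.mem_smoothNumbers_of_dvd ha (Nat.dvd_of_mem_divisors hm)

lemma exists_tauNat_le_rpow (k : ℕ) {ε : ℝ} (hε : 0 < ε) : ∃ C : ℝ, 0 < C ∧
    ∀ n, (tauNat k n : ℝ) ≤ C * (n : ℝ) ^ ε := by
  obtain ⟨M, hM⟩ := exists_nat_ge ((k : ℝ) ^ (1 / ε))
  have hkM : (k : ℝ) ≤ (M : ℝ) ^ ε := by
    rwa [one_div, Real.rpow_inv_le_iff_of_pos k.cast_nonneg M.cast_nonneg hε] at hM
  obtain ⟨C, hC, hsmooth⟩ := exists_tauNat_le_rpow_of_smooth k M hε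
  refine ⟨C, hC, fun n ↦ ?_⟩
  rcases eq_or_ne n 0 with rfl | hn
  · simp [tauNat, Real.zero_rpow hε.ne']
  obtain ⟨a, b, rfl, ha, hb⟩ := exists_smooth_mul_rough M hn
  have hb0 : b ≠ 0 := right_ne_zero_of_mul hn
  calc (tauNat k (a * b) : ℝ) ≤ (k : ℝ) ^ Ω b * tauNat k a := by
        exact_mod_cast tauNat_mul_le_pow_cardFactors k a hb0
    _ ≤ (b : ℝ) ^ ε * (C * (a : ℝ) ^ ε) := by
        gcongr
        · exact pow_cardFactors_le_rpow k.cast_nonneg hε.le hb0 hkM hb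
        · exact hsmooth a ha
    _ = C * ((a * b : ℕ) : ℝ) ^ ε := by
        rw [Nat.cast_mul, Real.mul_rpow a.cast_nonneg b.cast_nonneg]
        ring

lemma exists_append_cons_of_lt_prod {z : ℕ} (hz : 1 ≤ z) {l : List ℕ} (hl : z < l.prod) :
    ∃ l₁ p l₂, l = l₁ ++ p :: l₂ ∧ l₁.prod ≤ z ∧ z < l₁.prod * p := by
  induction l using List.reverseRecOn with
  | nil => exact absurd (hl.trans_eq List.prod_nil) hz.not_gt
  | append_singleton l x ih =>
    rcases lt_or_ge z l.prod with hlt | hge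
    · obtain ⟨l₁, p, l₂, rfl, hle, hgt⟩ := ih hlt
      exact ⟨l₁, p, l₂ ++ [x], by simp, hle, hgt⟩
    · exact ⟨l, x, [], rfl, hge, by simpa using hl⟩

lemma exists_mul_of_lt {n z : ℕ} (hz : 1 ≤ z) (hzn : z < n) : ∃ a b p, n = a * b ∧ p.Prime ∧
    a ≤ z ∧ z < a * p ∧ (∀ q, q.Prime → q ∣ a → q ≤ p) ∧ ∀ q, q.Prime → q ∣ b → p ≤ q := by
  have hprod : n.primeFactorsList.prod = n := Nat.prod_primeFactorsList (by omega)
  obtain ⟨l₁, p, l₂, hl, hle, hgt⟩ := exists_append_cons_of_lt_prod hz (hprod.symm ▸ hzn)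
  have hprime : ∀ q ∈ l₁ ++ p :: l₂, q.Prime := fun q hq ↦
    Nat.prime_of_mem_primeFactorsList (hl ▸ hq)
  have hsorted := List.pairwise_append.1 (hl ▸ (Nat.primeFactorsList_sorted n).pairwise)
  refine ⟨l₁.prod, (p :: l₂).prod, p, ?_, hprime p (by simp), hle, hgt, fun q hq hqa ↦ ?_,
    fun q hq hqb ↦ ?_⟩
  · rw [← List.prod_append, ← hl, hprod]
  · have hmem := mem_list_primes_of_dvd_prod hq.prime
      (fun r hr ↦ (hprime r (List.mem_append_left _ hr)).prime) hqa
    exact hsorted.2.2 q hmem p (List.mem_cons_self ..)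
  · have hmem := mem_list_primes_of_dvd_prod hq.prime
      (fun r hr ↦ (hprime r (List.mem_append_right _ hr)).prime) hqb
    rcases List.mem_cons.1 hmem with rfl | hmem
    exacts [le_rfl, (List.pairwise_cons.1 hsorted.2.1).1 q hmem]

lemma cardFactors_le_of_le_pow {b p s z B : ℕ} (hb : b ≠ 0) (hp : 2 ≤ p) (hz : z < p ^ (s + 1))
    (hbz : b ≤ (2 * z) ^ B) (hbp : ∀ q, q.Prime → q ∣ b → p ≤ q) : Ω b ≤ (s + 2) * B := by
  refine (Nat.pow_le_pow_iff_right hp).1 ?_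
  calc p ^ Ω b ≤ (2 * z) ^ B := (pow_cardFactors_le hb hbp).trans hbz
    _ ≤ (p * p ^ (s + 1)) ^ B := Nat.pow_le_pow_left (Nat.mul_le_mul hp hz.le) B
    _ = p ^ ((s + 2) * B) := by rw [← pow_succ', ← pow_mul]

lemma exists_dvd_tauNat_le {k : ℕ} (hk : 1 ≤ k) {B n z : ℕ} (hn : n ≠ 0) (hz : 1 ≤ z)
    (hnz : n ≤ (2 * z) ^ B) : ∃ a s, a ∣ n ∧ a ≤ z ∧ 1 ≤ s ∧
      tauNat k n ≤ k ^ ((s + 2) * B) * tauNat k a ∧ (∀ q, q.Prime → q ∣ a → q ^ s ≤ z) ∧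
      (s = 1 ∨ z < a ^ 2) := by
  rcases le_or_gt n z with hle | hzn
  · exact ⟨n, 1, dvd_rfl, hle, le_rfl, Nat.le_mul_of_pos_left _ (pow_pos hk _), fun q _ hqn ↦
      (pow_one q).trans_le ((Nat.le_of_dvd hn.bot_lt hqn).trans hle), Or.inl rfl⟩
  obtain ⟨a, b, p, rfl, hp, haz, hzap, hap, hbp⟩ := exists_mul_of_lt hz hzn
  have ha0 : a ≠ 0 := left_ne_zero_of_mul hn
  have hb0 : b ≠ 0 := right_ne_zero_of_mul hn
  have hzlog : z < p ^ (Nat.log p z + 1) := Nat.lt_pow_succ_log_self hp.one_lt z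
  have hbz : b ≤ (2 * z) ^ B := (Nat.le_mul_of_pos_left b ha0.bot_lt).trans hnz
  refine ⟨a, max 1 (Nat.log p z), Dvd.intro b rfl, haz, le_max_left _ _, ?_, fun q hq hqa ↦ ?_, ?_⟩
  · refine (tauNat_mul_le_pow_cardFactors k a hb0).trans ?_
    gcongr ?_ * _
    refine Nat.pow_le_pow_right hk <|
      (cardFactors_le_of_le_pow hb0 hp.two_le hzlog hbz hbp).trans ?_
    gcongr
    exact le_max_right _ _
  · rcases le_total (Nat.log p z) 1 with hs | hs
    · rw [max_eq_left hs, pow_one]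
      exact (Nat.le_of_dvd ha0.bot_lt hqa).trans haz
    · rw [max_eq_right hs]
      exact (Nat.pow_le_pow_left (hap q hq hqa) _).trans (Nat.pow_log_le_self p (by omega))
  · rcases le_or_gt (Nat.log p z) 1 with hs | hs
    · exact Or.inl (max_eq_left hs)
    · have hpz : p ^ 2 ≤ z :=
        (Nat.pow_le_pow_right hp.pos hs).trans (Nat.pow_log_le_self p (by omega))
      right
      nlinarith [Nat.pow_lt_pow_left hzap two_ne_zero]

/-! ### The majorant -/

lemma mem_nthRoot_smoothNumbers {s z d : ℕ} (hs : s ≠ 0) :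
    d ∈ (Nat.nthRoot s z + 1).smoothNumbers ↔ ∀ p, p.Prime → p ∣ d → p ^ s ≤ z := by
  simp only [Nat.mem_smoothNumbers', Nat.lt_succ_iff, Nat.le_nthRoot_iff hs]

lemma log_nthRoot_le {s z : ℕ} (hs : s ≠ 0) : Real.log (Nat.nthRoot s z) ≤ Real.log z / s := by
  have hs0 : (0 : ℝ) < s := by exact_mod_cast hs.bot_lt
  rw [le_div_iff₀' hs0, ← Real.log_pow]
  rcases (Nat.nthRoot s z).eq_zero_or_pos with h | h
  · rw [h, Nat.cast_zero, zero_pow hs, Real.log_zero]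
    exact Real.log_natCast_nonneg z
  · exact Real.log_le_log (by positivity) (by exact_mod_cast Nat.pow_nthRoot_le (Or.inl hs))

/-- The Rankin weight `τ_k(d) d ^ (A s / log z)` restricted to the `d` all of whose prime factors
are at most `z ^ (1 / s)`. -/
noncomputable def rankinWeight (k : ℕ) (A : ℝ) (s z : ℕ) : ℕ → ℝ :=
  ((Nat.nthRoot s z + 1).smoothNumbers).indicator fun d ↦
    tauNat k d * (d : ℝ) ^ (A * s / Real.log z)

lemma rankinWeight_nonneg (k : ℕ) (A : ℝ) (s z d : ℕ) : 0 ≤ rankinWeight k A s z d :=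
  Set.indicator_nonneg (fun d _ ↦ by positivity) d

lemma exists_sum_rankinWeight_div_le (k : ℕ) {A : ℝ} (hA : 0 < A) : ∃ C : ℝ, 0 < C ∧
    ∀ s z : ℕ, 1 ≤ s → 4 * A * s ≤ Real.log z →
      ∑ d ∈ Icc 1 z, rankinWeight k A s z d / d ≤ C * (1 + Real.log z) ^ k := by
  classical
  obtain ⟨C, hC, hrankin⟩ := exists_sum_smoothNumbers_rpow_le hA
  refine ⟨C ^ k, pow_pos hC k, fun s z hs hsz ↦ ?_⟩
  have hs0 : (0 : ℝ) < s := by exact_mod_cast hs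
  have hs1 : (1 : ℝ) ≤ s := by exact_mod_cast hs
  set L := Real.log z / s
  have hAL : 4 * A ≤ L := (le_div_iff₀ hs0).2 hsz
  have hLz : L ≤ Real.log z := div_le_self (Real.log_natCast_nonneg z) hs1
  set D := {d ∈ Icc 1 z | d ∈ (Nat.nthRoot s z + 1).smoothNumbers}
  calc ∑ d ∈ Icc 1 z, rankinWeight k A s z d / d
      = ∑ d ∈ D, tauNat k d * (d : ℝ) ^ (A / L - 1) := by
        rw [sum_filter]
        refine sum_congr rfl fun d hd ↦ ?_
        have hd0 : (d : ℝ) ≠ 0 := by exact_mod_cast Nat.pos_iff_ne_zero.1 (mem_Icc.1 hd).1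
        rw [rankinWeight, Set.indicator_apply, ite_div, zero_div, Real.rpow_sub_one hd0,
          mul_div_assoc, div_div_eq_mul_div]
    _ ≤ (∑ d ∈ D, (d : ℝ) ^ (A / L - 1)) ^ k := by
        refine sum_tauNat_mul_le_pow_sum (natRpowHom (A / L - 1))
          (fun n ↦ Real.rpow_nonneg n.cast_nonneg _) k fun d hd m hmd ↦ ?_
        obtain ⟨hdz, hd⟩ := mem_filter.1 hd
        obtain ⟨hd1, hdz⟩ := mem_Icc.1 hdz
        exact mem_filter.2 ⟨mem_Icc.2 ⟨Nat.pos_of_dvd_of_pos hmd hd1,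
          (Nat.le_of_dvd hd1 hmd).trans hdz⟩, Nat.mem_smoothNumbers_of_dvd hd hmd⟩
    _ ≤ (C * (1 + L)) ^ k := by
        gcongr
        exact hrankin _ L hAL (log_nthRoot_le (by omega)) D fun m hm ↦ (mem_filter.1 hm).2
    _ ≤ C ^ k * (1 + Real.log z) ^ k := by
        rw [← mul_pow]
        gcongr

lemma sum_Icc_inv_two_pow_le_one (m : ℕ) : ∑ s ∈ Icc 1 m, (2⁻¹ : ℝ) ^ s ≤ 1 := by
  rw [← Ico_add_one_right_eq_Icc]
  exact (geom_sum_Ico_le_of_lt_one (by norm_num) (by norm_num)).trans_eq (by norm_num)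

lemma sum_indicator_smoothNumbers_rpow_div_le {s : ℝ} (hs : s < 1) (P z : ℕ) :
    ∑ d ∈ Icc 1 z, P.smoothNumbers.indicator (fun d ↦ (d : ℝ) ^ s) d / d ≤
      ∏ p ∈ P.primesBelow, (1 - (p : ℝ) ^ (s - 1))⁻¹ := by
  classical
  calc ∑ d ∈ Icc 1 z, P.smoothNumbers.indicator (fun d ↦ (d : ℝ) ^ s) d / d
      = ∑ d ∈ Icc 1 z with d ∈ P.smoothNumbers, (d : ℝ) ^ (s - 1) := by
        rw [sum_filter]
        refine sum_congr rfl fun d hd ↦ ?_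
        have hd0 : (d : ℝ) ≠ 0 := by exact_mod_cast Nat.pos_iff_ne_zero.1 (mem_Icc.1 hd).1
        rw [Set.indicator_apply, ite_div, zero_div, ← Real.rpow_sub_one hd0]
    _ ≤ ∏ p ∈ P.primesBelow, (1 - (p : ℝ) ^ (s - 1))⁻¹ :=
        sum_rpow_le_prod_primesBelow (sub_neg.2 hs) fun d hd ↦ (mem_filter.1 hd).2

/-- The majorant of `τ_k`: the value `τ_k(n)` is to be compared with the sum of
`tauMajorant k A K P z d` over the divisors `d ≤ z` of `n`. The scale `s` of a Rankin weight
handles the `n` whose prime factors leave the range `d ≤ z` near `z ^ (1 / s)`, and the last term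
handles the `P`-smooth divisors. -/
noncomputable def tauMajorant (k : ℕ) (A K : ℝ) (P z d : ℕ) : ℝ :=
  K * ∑ s ∈ Icc 1 ⌊Real.log z / (4 * A)⌋₊, 2⁻¹ ^ s * rankinWeight k A s z d +
    K * P.smoothNumbers.indicator (fun d ↦ (d : ℝ) ^ (1 / 4 : ℝ)) d

lemma tauMajorant_nonneg (k : ℕ) (A : ℝ) {K : ℝ} (hK : 0 ≤ K) (P z d : ℕ) :
    0 ≤ tauMajorant k A K P z d :=
  add_nonneg
    (mul_nonneg hK <| sum_nonneg fun s _ ↦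
      mul_nonneg (by positivity) (rankinWeight_nonneg k A s z d))
    (mul_nonneg hK <| Set.indicator_nonneg (fun d _ ↦ by positivity) d)

lemma mem_Icc_floor_log_div_iff {A : ℝ} (hA : 0 < A) {s z : ℕ} :
    s ∈ Icc 1 ⌊Real.log z / (4 * A)⌋₊ ↔ 1 ≤ s ∧ 4 * A * s ≤ Real.log z := by
  rw [mem_Icc, Nat.le_floor_iff (div_nonneg (Real.log_natCast_nonneg z) (by positivity)),
    le_div_iff₀' (by positivity)]

lemma mul_rankinWeight_le_tauMajorant (k : ℕ) {A K : ℝ} (hA : 0 < A) (hK : 0 ≤ K) (P : ℕ)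
    {s z : ℕ} (hs : 1 ≤ s) (hsz : 4 * A * s ≤ Real.log z) (d : ℕ) :
    K * (2⁻¹ ^ s * rankinWeight k A s z d) ≤ tauMajorant k A K P z d := by
  refine le_trans ?_ (le_add_of_nonneg_right
    (mul_nonneg hK <| Set.indicator_nonneg (fun d _ ↦ by positivity) d))
  exact mul_le_mul_of_nonneg_left (single_le_sum (f := fun s ↦ 2⁻¹ ^ s * rankinWeight k A s z d)
    (fun s _ ↦ mul_nonneg (by positivity) (rankinWeight_nonneg k A s z d))
    ((mem_Icc_floor_log_div_iff hA).2 ⟨hs, hsz⟩)) hK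

lemma mul_rpow_le_tauMajorant (k : ℕ) (A : ℝ) {K : ℝ} (hK : 0 ≤ K) {P d : ℕ}
    (hd : d ∈ P.smoothNumbers) (z : ℕ) :
    K * (d : ℝ) ^ (1 / 4 : ℝ) ≤ tauMajorant k A K P z d := by
  rw [tauMajorant, Set.indicator_of_mem hd]
  exact le_add_of_nonneg_left (mul_nonneg hK <| sum_nonneg fun s _ ↦
    mul_nonneg (by positivity) (rankinWeight_nonneg k A s z d))

lemma exists_sum_tauMajorant_div_le (k : ℕ) {A K : ℝ} (hA : 0 < A) (hK : 0 ≤ K) (P : ℕ) :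
    ∃ C : ℝ, 0 < C ∧ ∀ z : ℕ,
      ∑ d ∈ Icc 1 z, tauMajorant k A K P z d / d ≤ C * (1 + Real.log z) ^ k := by
  obtain ⟨C, hC, hrankin⟩ := exists_sum_rankinWeight_div_le k hA
  set E := ∏ p ∈ P.primesBelow, (1 - (p : ℝ) ^ (1 / 4 - 1 : ℝ))⁻¹
  have hE : 0 < E := prod_pos fun p hp ↦ inv_one_sub_rpow_pos (by norm_num) hp
  refine ⟨(K + 1) * (C + E), by positivity, fun z ↦ ?_⟩
  have hlog : 1 ≤ (1 + Real.log z) ^ k :=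
    one_le_pow₀ (le_add_of_nonneg_right (Real.log_natCast_nonneg z))
  have hscales : ∑ d ∈ Icc 1 z, (∑ s ∈ Icc 1 ⌊Real.log z / (4 * A)⌋₊,
      2⁻¹ ^ s * rankinWeight k A s z d) / d ≤ C * (1 + Real.log z) ^ k :=
    calc _ = ∑ s ∈ Icc 1 ⌊Real.log z / (4 * A)⌋₊,
          2⁻¹ ^ s * ∑ d ∈ Icc 1 z, rankinWeight k A s z d / d := by
          simp only [sum_div, mul_sum, mul_div_assoc]
          exact sum_comm
      _ ≤ ∑ s ∈ Icc 1 ⌊Real.log z / (4 * A)⌋₊, 2⁻¹ ^ s * (C * (1 + Real.log z) ^ k) := by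
          gcongr with s hs
          obtain ⟨hs, hsz⟩ := (mem_Icc_floor_log_div_iff hA).1 hs
          exact hrankin s z hs hsz
      _ ≤ C * (1 + Real.log z) ^ k := by
          rw [← sum_mul]
          exact mul_le_of_le_one_left (by positivity) (sum_Icc_inv_two_pow_le_one _)
  have hsmooth : ∑ d ∈ Icc 1 z, P.smoothNumbers.indicator (fun d ↦ (d : ℝ) ^ (1 / 4 : ℝ)) d / d
      ≤ E * (1 + Real.log z) ^ k :=
    (sum_indicator_smoothNumbers_rpow_div_le (by norm_num) P z).trans
      (le_mul_of_one_le_right hE.le hlog)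
  calc ∑ d ∈ Icc 1 z, tauMajorant k A K P z d / d
      ≤ K * (C * (1 + Real.log z) ^ k) + K * (E * (1 + Real.log z) ^ k) := by
        simp only [tauMajorant, add_div, mul_div_assoc, sum_add_distrib, ← mul_sum]
        gcongr
    _ ≤ (K + 1) * (C + E) * (1 + Real.log z) ^ k := by
        have : 0 ≤ (C + E) * (1 + Real.log z) ^ k := by positivity
        linarith

lemma pow_le_rpow_two_mul_log_div {x : ℝ} (hx : 1 ≤ x) {a z : ℕ} (hz : 0 < Real.log z)
    (hza : z < a ^ 2) (s : ℕ) : x ^ s ≤ (a : ℝ) ^ (2 * Real.log x * s / Real.log z) := by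
  have ha0 : (0 : ℝ) < a := by
    exact_mod_cast Nat.pos_of_ne_zero (by rintro rfl; simp at hza)
  have hz0 : (0 : ℝ) < z := zero_lt_one.trans ((Real.log_pos_iff z.cast_nonneg).1 hz)
  have hlog : Real.log z ≤ 2 * Real.log a := by
    rw [← Nat.cast_ofNat, ← Real.log_pow]
    exact Real.log_le_log hz0 (by exact_mod_cast hza.le)
  rw [← Real.log_le_log_iff (by positivity) (by positivity), Real.log_pow, Real.log_rpow ha0,
    div_mul_eq_mul_div, le_div_iff₀ hz]
  calc s * Real.log x * Real.log z ≤ s * Real.log x * (2 * Real.log a) :=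
        mul_le_mul_of_nonneg_left hlog (mul_nonneg s.cast_nonneg (Real.log_nonneg hx))
    _ = 2 * Real.log x * s * Real.log a := by ring

lemma pow_mul_tauNat_le_rankinWeight {k B a s z : ℕ} {A : ℝ} (hk : 1 ≤ k)
    (hA : A = 2 * Real.log (2 * k ^ B)) (ha : a ≠ 0) (hs : 1 ≤ s) (hz : 0 < Real.log z)
    (hsmooth : ∀ q, q.Prime → q ∣ a → q ^ s ≤ z) (hsa : s = 1 ∨ z < a ^ 2) :
    (k : ℝ) ^ ((s + 2) * B) * tauNat k a ≤
      2 * k ^ (3 * B) * (2⁻¹ ^ s * rankinWeight k A s z a) := by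
  have hk1 : (1 : ℝ) ≤ k := by exact_mod_cast hk
  have ha1 : (1 : ℝ) ≤ a := by exact_mod_cast ha.bot_lt
  have hx : (1 : ℝ) ≤ 2 * k ^ B := by linarith [one_le_pow₀ hk1 (n := B)]
  have hgain : (2 : ℝ) ^ s * k ^ ((s + 2) * B) ≤
      2 * k ^ (3 * B) * (a : ℝ) ^ (A * s / Real.log z) := by
    rcases hsa with rfl | hza
    · rw [pow_one]
      refine le_mul_of_one_le_right (by positivity) (Real.one_le_rpow ha1 ?_)
      have := Real.log_nonneg hx
      have := Real.log_natCast_nonneg z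
      rw [hA]
      positivity
    · calc (2 : ℝ) ^ s * k ^ ((s + 2) * B) = k ^ (2 * B) * (2 * k ^ B) ^ s := by ring
        _ ≤ (2 * k ^ (3 * B)) * (a : ℝ) ^ (A * s / Real.log z) := by
          rw [hA]
          gcongr
          · refine (pow_le_pow_right₀ hk1 (by omega : 2 * B ≤ 3 * B)).trans ?_
            exact le_mul_of_one_le_left (by positivity) one_le_two
          · exact pow_le_rpow_two_mul_log_div hx hz hza s
  rw [rankinWeight, Set.indicator_of_mem ((mem_nthRoot_smoothNumbers (by omega)).2 hsmooth)]
  calc (k : ℝ) ^ ((s + 2) * B) * tauNat k a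
      = 2⁻¹ ^ s * tauNat k a * (2 ^ s * k ^ ((s + 2) * B)) := by
        rw [inv_pow]
        field_simp
    _ ≤ 2⁻¹ ^ s * tauNat k a * (2 * k ^ (3 * B) * (a : ℝ) ^ (A * s / Real.log z)) := by gcongr
    _ = 2 * k ^ (3 * B) * (2⁻¹ ^ s * (tauNat k a * (a : ℝ) ^ (A * s / Real.log z))) := by ring

lemma rpow_le_mul_rpow_one_fourth {a B n P z : ℕ} (ha : 1 ≤ a) (hz : 1 ≤ z) (hzP : z ≤ P * a ^ 2)
    (hnz : n ≤ (2 * z) ^ B) :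
    (n : ℝ) ^ (1 / (8 * (B + 1)) : ℝ) ≤ 2 * P * (a : ℝ) ^ (1 / 4 : ℝ) := by
  have hP : 1 ≤ 2 * P := by
    rcases P.eq_zero_or_pos with rfl | hP <;> omega
  calc (n : ℝ) ^ (1 / (8 * (B + 1)) : ℝ)
      ≤ (((2 * z : ℕ) : ℝ) ^ (B + 1)) ^ (1 / (8 * (B + 1)) : ℝ) := by
        gcongr
        exact_mod_cast hnz.trans (Nat.pow_le_pow_right (by omega) B.le_succ)
    _ = ((2 * z : ℕ) : ℝ) ^ (1 / 8 : ℝ) := by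
        rw [← Real.rpow_natCast, ← Real.rpow_mul (Nat.cast_nonneg _)]
        congr 1
        push_cast
        field_simp
    _ ≤ ((2 * P : ℕ) * (a : ℝ) ^ 2) ^ (1 / 8 : ℝ) := by
        gcongr
        exact_mod_cast (by linarith : 2 * z ≤ 2 * P * a ^ 2)
    _ = ((2 * P : ℕ) : ℝ) ^ (1 / 8 : ℝ) * (a : ℝ) ^ (1 / 4 : ℝ) := by
        rw [Real.mul_rpow (by positivity) (by positivity), ← Real.rpow_natCast_mul a.cast_nonneg]
        norm_num
    _ ≤ (2 * P : ℕ) * (a : ℝ) ^ (1 / 4 : ℝ) := by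
        gcongr
        exact Real.rpow_le_self_of_one_le (by exact_mod_cast hP) (by norm_num)
    _ = 2 * P * (a : ℝ) ^ (1 / 4 : ℝ) := by push_cast; rfl

lemma lt_of_pow_le_of_log_lt {c : ℝ} {P q s z : ℕ} (hq : 1 ≤ q) (hqz : q ^ s ≤ z)
    (hzs : Real.log z < c * s) (hP : Real.exp c ≤ P) : q < P := by
  have hq0 : (0 : ℝ) < q := by exact_mod_cast hq
  have hlog : s * Real.log q ≤ Real.log z := by
    rw [← Real.log_pow]
    exact Real.log_le_log (by positivity) (by exact_mod_cast hqz)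
  have hqc : Real.log q < c := lt_of_mul_lt_mul_left (by linarith) s.cast_nonneg
  exact_mod_cast ((Real.log_lt_iff_lt_exp hq0).1 hqc).trans_le hP

lemma exists_tauNat_le_sum_tauMajorant {k : ℕ} (hk : 1 ≤ k) (B : ℕ) :
    ∃ (A K : ℝ) (P : ℕ), 0 < A ∧ 0 ≤ K ∧ ∀ z n : ℕ, 1 ≤ z → n ≠ 0 → n ≤ (2 * z) ^ B →
      tauNat k n ≤ ∑ d ∈ Icc 1 z with d ∣ n, tauMajorant k A K P z d := by
  have hk1 : (1 : ℝ) ≤ k := by exact_mod_cast hk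
  -- The exponent turns `n ≤ (2 * z) ^ B` and `z ≪ a ^ 2` into `n ^ ε ≪ a ^ (1 / 4)`.
  obtain ⟨C, hC, hdivisor⟩ := exists_tauNat_le_rpow k (ε := 1 / (8 * (B + 1))) (by positivity)
  -- With this `A`, Rankin's trick pays for the factor `2 ^ s * k ^ ((s + 2) * B)`.
  set A := 2 * Real.log (2 * k ^ B) with hAdef
  have hA : 0 < A := mul_pos two_pos (Real.log_pos (by linarith [one_le_pow₀ hk1 (n := B)]))
  obtain ⟨P, hP⟩ := exists_nat_ge (Real.exp (4 * A))
  set K := 2 * (k : ℝ) ^ (3 * B) + C * (2 * P)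
  have hK : 0 ≤ K := by positivity
  refine ⟨A, K, P, hA, hK, fun z n hz hn hnz ↦ ?_⟩
  obtain ⟨a, s, han, haz, hs, htau, hsmooth, hsa⟩ := exists_dvd_tauNat_le hk hn hz hnz
  have ha : 1 ≤ a := Nat.pos_of_dvd_of_pos han hn.bot_lt
  refine le_trans ?_ (single_le_sum (fun d _ ↦ tauMajorant_nonneg k A hK P z d)
    (mem_filter.2 ⟨mem_Icc.2 ⟨ha, haz⟩, han⟩))
  rcases le_or_gt (4 * A * s) (Real.log z) with hsz | hsz
  · have hlogz : 0 < Real.log z := lt_of_lt_of_le (by positivity) hsz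
    calc (tauNat k n : ℝ) ≤ k ^ ((s + 2) * B) * tauNat k a := by exact_mod_cast htau
      _ ≤ 2 * k ^ (3 * B) * (2⁻¹ ^ s * rankinWeight k A s z a) :=
        pow_mul_tauNat_le_rankinWeight hk hAdef (by omega) hs hlogz hsmooth hsa
      _ ≤ K * (2⁻¹ ^ s * rankinWeight k A s z a) := by
        refine mul_le_mul_of_nonneg_right (le_add_of_nonneg_right (by positivity)) ?_
        exact mul_nonneg (by positivity) (rankinWeight_nonneg k A s z a)
      _ ≤ tauMajorant k A K P z a := mul_rankinWeight_le_tauMajorant k hA hK P hs hsz a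
  · have haP : a ∈ P.smoothNumbers := Nat.mem_smoothNumbers'.2 fun q hq hqa ↦
      lt_of_pow_le_of_log_lt hq.one_le (hsmooth q hq hqa) hsz hP
    have hP1 : 1 ≤ P := by exact_mod_cast (Real.exp_pos _).trans_le hP
    have hzP : z ≤ P * a ^ 2 := by
      rcases hsa with rfl | hza
      · have hzP : z < P := lt_of_pow_le_of_log_lt hz (pow_one z).le hsz hP
        exact hzP.le.trans (Nat.le_mul_of_pos_right P (by positivity))
      · exact hza.le.trans (Nat.le_mul_of_pos_left _ hP1)
    calc (tauNat k n : ℝ) ≤ C * (n : ℝ) ^ (1 / (8 * (B + 1)) : ℝ) := hdivisor n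
      _ ≤ C * (2 * P * (a : ℝ) ^ (1 / 4 : ℝ)) := by
        gcongr
        exact rpow_le_mul_rpow_one_fourth ha hz hzP hnz
      _ ≤ K * (a : ℝ) ^ (1 / 4 : ℝ) := by
        rw [← mul_assoc]
        gcongr
        exact le_add_of_nonneg_left (by positivity)
      _ ≤ tauMajorant k A K P z a := mul_rpow_le_tauMajorant k A hK haP z

/-! ### Counting in residue classes -/

lemma card_mul_le_of_modEq {S : Finset ℕ} {a L M : ℕ} (hS : S ⊆ Ico a (a + L))
    (h : ∀ x ∈ S, ∀ y ∈ S, x ≡ y [MOD M]) : #S * M ≤ L + M := by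
  rcases M.eq_zero_or_pos with rfl | hM
  · simp
  rcases S.eq_empty_or_nonempty with rfl | ⟨v, hv⟩
  · simp
  have hM0 : (0 : ℚ) < M := by exact_mod_cast hM
  have hclass : #{x ∈ Ico a (a + L) | x ≡ v [MOD M]} ≤ (L / M + 1 : ℚ) := by
    rw [← Int.cast_natCast, Nat.Ico_filter_modEq_card _ _ hM, Int.cast_max, Int.cast_sub]
    refine max_le ?_ (by rw [Int.cast_zero]; positivity)
    have hup := Int.ceil_lt_add_one (((a + L : ℕ) - v : ℚ) / M)
    have hlow := Int.le_ceil ((a - v : ℚ) / M)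
    have hsplit : ((a + L : ℕ) - v : ℚ) / M = (a - v) / M + L / M := by push_cast; ring
    linarith
  have hcard : (#S : ℚ) ≤ L / M + 1 := le_trans
    (by exact_mod_cast card_le_card fun x hx ↦ mem_filter.2 ⟨hS hx, h x hx v hv⟩) hclass
  have hmul : (#S : ℚ) * M ≤ L + M :=
    (mul_le_mul_of_nonneg_right hcard hM0.le).trans_eq (by field_simp)
  exact_mod_cast hmul

lemma card_Ico_filter_dvd_mul_le (a L d : ℕ) :
    #{u ∈ Ico a (a + L) | d ∣ u} * d ≤ L + d :=
  card_mul_le_of_modEq (filter_subset _ _) fun _ hx _ hy ↦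
    (Nat.modEq_zero_iff_dvd.2 (mem_filter.1 hx).2).trans
      (Nat.modEq_zero_iff_dvd.2 (mem_filter.1 hy).2).symm

lemma card_filter_dvd_unit_mul_add_mul_le (e V : ℕ) {ε : ℤ} (hε : IsUnit ε) (c : ℤ) :
    #{v ∈ Icc 1 V | (e : ℤ) ∣ ε * (v : ℕ) + c} * e ≤ V + e := by
  refine card_mul_le_of_modEq (a := 1) (fun v hv ↦ ?_) fun x hx y hy ↦ ?_
  · have := mem_Icc.1 (mem_filter.1 hv).1
    exact mem_Ico.2 (by omega)
  · have h := dvd_sub (mem_filter.1 hy).2 (mem_filter.1 hx).2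
    rw [add_sub_add_right_eq_sub, ← mul_sub, hε.dvd_mul_left] at h
    exact Nat.modEq_iff_dvd.2 h

lemma mul_div_gcd_dvd {d e q : ℕ} {x : ℤ} (he : 0 < e) (hd : (d : ℤ) ∣ x)
    (hx : (e : ℤ) ∣ x * q) : ((d * (e / e.gcd (d * q)) : ℕ) : ℤ) ∣ x := by
  obtain ⟨w, rfl⟩ := hd
  rw [mul_right_comm, ← Int.modEq_zero_iff_dvd, ← mul_zero ((d : ℤ) * q)] at hx
  have h := Int.ModEq.cancel_left_div_gcd (by exact_mod_cast he) hx
  rw [Nat.cast_mul]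
  refine mul_dvd_mul_left _ ?_
  rw [← Int.modEq_zero_iff_dvd]
  exact_mod_cast h

lemma card_filter_dvd_add_mul_le (a L d : ℕ) {e : ℕ} (he : 0 < e) (q : ℕ) (c : ℤ) :
    #{u ∈ Ico a (a + L) | d ∣ u ∧ (e : ℤ) ∣ c + (u : ℤ) * q} * (d * (e / e.gcd (d * q))) ≤
      L + d * (e / e.gcd (d * q)) := by
  refine card_mul_le_of_modEq (filter_subset _ _) fun x hx y hy ↦ ?_
  obtain ⟨-, hdx, hex⟩ := mem_filter.1 hx
  obtain ⟨-, hdy, hey⟩ := mem_filter.1 hy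
  refine Nat.modEq_iff_dvd.2 (mul_div_gcd_dvd he ?_ ?_)
  · exact dvd_sub (Int.natCast_dvd_natCast.2 hdy) (Int.natCast_dvd_natCast.2 hdx)
  · have h := dvd_sub hey hex
    rwa [add_sub_add_left_eq_sub, ← sub_mul] at h

lemma sum_card_filter_dvd_mul_le_of_le {U V d e : ℕ} (q : ℕ) (hdU : d ≤ U) (heV : e ≤ V)
    {ε : ℤ} (hε : IsUnit ε) :
    (∑ u ∈ Ico U (2 * U) with d ∣ u,
      #{v ∈ Icc 1 V | (e : ℤ) ∣ ε * (v : ℕ) + (u : ℤ) * q}) * (d * e) ≤ 4 * (V * U) := by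
  rw [two_mul]
  calc (∑ u ∈ Ico U (U + U) with d ∣ u,
        #{v ∈ Icc 1 V | (e : ℤ) ∣ ε * (v : ℕ) + (u : ℤ) * q}) * (d * e)
      = (∑ u ∈ Ico U (U + U) with d ∣ u,
          #{v ∈ Icc 1 V | (e : ℤ) ∣ ε * (v : ℕ) + (u : ℤ) * q} * e) * d := by
        rw [← sum_mul]
        ring
    _ ≤ (∑ u ∈ Ico U (U + U) with d ∣ u, (V + e)) * d := by
        gcongr
        exact card_filter_dvd_unit_mul_add_mul_le e V hε _
    _ = #{u ∈ Ico U (U + U) | d ∣ u} * d * (V + e) := by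
        rw [sum_const, smul_eq_mul, mul_right_comm]
    _ ≤ (U + d) * (V + e) := Nat.mul_le_mul_right _ (card_Ico_filter_dvd_mul_le U U d)
    _ ≤ (U + U) * (V + V) := by gcongr
    _ = 4 * (V * U) := by ring

lemma gcd_dvd_of_dvd_unit_mul_add {d e q u v : ℕ} {ε : ℤ} (hε : IsUnit ε) (hd : d ∣ u)
    (h : (e : ℤ) ∣ ε * (v : ℕ) + (u : ℤ) * q) : e.gcd (d * q) ∣ v := by
  have hu : ((e.gcd (d * q) : ℕ) : ℤ) ∣ (u : ℤ) * q := by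
    exact_mod_cast (Nat.gcd_dvd_right e (d * q)).trans (Nat.mul_dvd_mul_right hd q)
  have hv := (dvd_add_left hu).1 ((Int.natCast_dvd_natCast.2 (Nat.gcd_dvd_left e _)).trans h)
  exact Int.natCast_dvd_natCast.1 (hε.dvd_mul_left.1 hv)

lemma sum_card_filter_dvd_mul_le_of_mul_le {U d e : ℕ} (V q : ℕ) (he : 0 < e)
    (hde : d * e ≤ U) {ε : ℤ} (hε : IsUnit ε) :
    (∑ u ∈ Ico U (2 * U) with d ∣ u,
      #{v ∈ Icc 1 V | (e : ℤ) ∣ ε * (v : ℕ) + (u : ℤ) * q}) * (d * e) ≤ 2 * (V * U) := by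
  set h := e.gcd (d * q)
  -- A fixed `u` would leave a range of `v` too short for the modulus `e`, so `v` is fixed instead:
  -- then `u` lies in a class modulo `d * (e / h)`, and `h` divides `v`.
  have hdiv : e / h * h = e := Nat.div_mul_cancel (Nat.gcd_dvd_left e _)
  have hU : d * (e / h) ≤ U := (Nat.mul_le_mul_left d (Nat.div_le_self e h)).trans hde
  have hswap : ∑ u ∈ Ico U (2 * U) with d ∣ u,
      #{v ∈ Icc 1 V | (e : ℤ) ∣ ε * (v : ℕ) + (u : ℤ) * q} =
      ∑ v ∈ Icc 1 V with h ∣ v,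
        #{u ∈ Ico U (U + U) | d ∣ u ∧ (e : ℤ) ∣ ε * (v : ℕ) + (u : ℤ) * q} := by
    rw [← two_mul]
    refine (sum_card_bipartiteAbove_eq_sum_card_bipartiteBelow
      (fun u v : ℕ ↦ (e : ℤ) ∣ ε * (v : ℕ) + (u : ℤ) * q)).trans ?_
    simp only [bipartiteBelow, filter_filter]
    refine (sum_filter_of_ne fun v _ hv ↦ ?_).symm
    obtain ⟨u, hu⟩ := card_ne_zero.1 hv
    obtain ⟨-, hdu, heu⟩ := mem_filter.1 hu
    exact gcd_dvd_of_dvd_unit_mul_add hε hdu heu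
  have hcard : #{v ∈ Icc 1 V | h ∣ v} * h ≤ V := by
    rw [show Icc 1 V = Ioc 0 V from rfl, Nat.Ioc_filter_dvd_card_eq_div]
    exact Nat.div_mul_le_self V h
  calc _ = (∑ v ∈ Icc 1 V with h ∣ v,
          #{u ∈ Ico U (U + U) | d ∣ u ∧ (e : ℤ) ∣ ε * (v : ℕ) + (u : ℤ) * q} *
            (d * (e / h))) * h := by
        rw [hswap, ← sum_mul, mul_assoc, mul_assoc d, hdiv]
    _ ≤ (∑ v ∈ Icc 1 V with h ∣ v, (U + d * (e / h))) * h := by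
        gcongr
        exact card_filter_dvd_add_mul_le U U d he q _
    _ = #{v ∈ Icc 1 V | h ∣ v} * h * (U + d * (e / h)) := by
        rw [sum_const, smul_eq_mul, mul_right_comm]
    _ ≤ V * (U + U) := by gcongr
    _ = 2 * (V * U) := by ring

lemma sum_card_filter_dvd_mul_le {U V d e : ℕ} (q : ℕ) (hdU : d ≤ U.sqrt)
    (heW : e ≤ (max U V).sqrt) {ε : ℤ} (hε : IsUnit ε) :
    (∑ u ∈ Ico U (2 * U) with d ∣ u,
      #{v ∈ Icc 1 V | (e : ℤ) ∣ ε * (v : ℕ) + (u : ℤ) * q}) * (d * e) ≤ 4 * (V * U) := by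
  rcases le_or_gt e V with heV | hVe
  · exact sum_card_filter_dvd_mul_le_of_le q (hdU.trans U.sqrt_le_self) heV hε
  · have hVU : V ≤ U := by
      by_contra! hUV
      rw [max_eq_right hUV.le] at heW
      exact hVe.not_ge (heW.trans V.sqrt_le_self)
    rw [max_eq_left hVU] at heW
    have hde : d * e ≤ U := (Nat.mul_le_mul hdU heW).trans U.sqrt_le
    exact (sum_card_filter_dvd_mul_le_of_mul_le V q (V.zero_le.trans_lt hVe) hde hε).trans
      (Nat.mul_le_mul_right _ (by norm_num))

lemma sum_sum_mul_sum_filter {α β γ δ R : Type*} [CommSemiring R] (S : Finset α) (T : Finset β)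
    (D : Finset γ) (E : Finset δ) (P : α → γ → Prop) [∀ u d, Decidable (P u d)]
    (Q : α → β → δ → Prop) [∀ u v e, Decidable (Q u v e)] (g : γ → R) (h : δ → R) :
    ∑ u ∈ S, ∑ v ∈ T, (∑ d ∈ D with P u d, g d) * ∑ e ∈ E with Q u v e, h e =
      ∑ d ∈ D, ∑ e ∈ E, (∑ u ∈ S with P u d, #{v ∈ T | Q u v e} : ℕ) * (g d * h e) := by
  calc _ = ∑ x ∈ S ×ˢ T, ∑ y ∈ D ×ˢ E,
        (if P x.1 y.1 then if Q x.1 x.2 y.2 then g y.1 * h y.2 else 0 else 0) := by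
        simp only [sum_product, sum_filter, sum_mul_sum, ite_zero_mul_ite_zero, ite_and]
    _ = _ := by
        rw [sum_comm]
        simp only [sum_product, sum_filter, card_filter, sum_mul, Nat.cast_sum, Nat.cast_ite,
          Nat.cast_one, Nat.cast_zero, ite_mul, one_mul, zero_mul]
        refine sum_congr rfl fun d _ ↦ sum_congr rfl fun e _ ↦ sum_congr rfl fun u _ ↦ ?_
        split_ifs
        · rfl
        · exact sum_const_zero

lemma sum_sum_mul_sum_filter_dvd_le {U V : ℕ} (q : ℕ) {ε : ℤ} (hε : IsUnit ε) {g h : ℕ → ℝ}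
    (hg : ∀ d, 0 ≤ g d) (hh : ∀ e, 0 ≤ h e) :
    ∑ u ∈ Ico U (2 * U), ∑ v ∈ Icc 1 V, (∑ d ∈ Icc 1 U.sqrt with d ∣ u, g d) *
        ∑ e ∈ Icc 1 (max U V).sqrt with ((e : ℕ) : ℤ) ∣ ε * (v : ℕ) + (u : ℤ) * q, h e ≤
      4 * (V * U) * ((∑ d ∈ Icc 1 U.sqrt, g d / d) * ∑ e ∈ Icc 1 (max U V).sqrt, h e / e) := by
  set D := Icc 1 U.sqrt
  set E := Icc 1 (max U V).sqrt
  let N (d e : ℕ) : ℕ := ∑ u ∈ Ico U (2 * U) with d ∣ u,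
    #{v ∈ Icc 1 V | (e : ℤ) ∣ ε * (v : ℕ) + (u : ℤ) * q}
  have hN : ∀ d ∈ D, ∀ e ∈ E, (N d e : ℝ) ≤ 4 * (V * U) / (d * e) := fun d hd e he ↦ by
    obtain ⟨hd, hdU⟩ := mem_Icc.1 hd
    obtain ⟨he, heW⟩ := mem_Icc.1 he
    rw [le_div_iff₀ (by positivity)]
    exact_mod_cast sum_card_filter_dvd_mul_le q hdU heW hε
  calc _ = ∑ d ∈ D, ∑ e ∈ E, N d e * (g d * h e) := sum_sum_mul_sum_filter ..
    _ ≤ ∑ d ∈ D, ∑ e ∈ E, 4 * (V * U) / (d * e) * (g d * h e) := by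
        gcongr with d hd e he
        · exact mul_nonneg (hg d) (hh e)
        · exact hN d hd e he
    _ = 4 * (V * U) * ((∑ d ∈ D, g d / d) * ∑ e ∈ E, h e / e) := by
        rw [sum_mul_sum]
        simp only [mul_sum]
        exact sum_congr rfl fun d _ ↦ sum_congr rfl fun e _ ↦ by ring

/-! ### The correlation sum -/

/-- A nonnegative function `g` majorizes `τ_k` at level `B` if `τ_k(m)` is at most the sum of
`g z d` over the divisors `d ≤ z` of `m` whenever `m ≤ (2 z) ^ B`. Integers `m ≤ 0` are included, so
that the shifted values `ε v + u q` need no case distinction. -/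
structure IsTauMajorant (k B : ℕ) (g : ℕ → ℕ → ℝ) : Prop where
  nonneg (z d : ℕ) : 0 ≤ g z d
  tauInt_le {z : ℕ} {m : ℤ} (hz : 1 ≤ z) (hm : m ≤ ((2 * z) ^ B : ℕ)) :
    tauInt k m ≤ ∑ d ∈ Icc 1 z with ((d : ℕ) : ℤ) ∣ m, g z d

lemma exists_isTauMajorant {k : ℕ} (hk : 1 ≤ k) (B : ℕ) :
    ∃ (g : ℕ → ℕ → ℝ) (C : ℝ), 0 < C ∧ IsTauMajorant k B g ∧
      ∀ z : ℕ, ∑ d ∈ Icc 1 z, g z d / d ≤ C * (1 + Real.log z) ^ k := by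
  obtain ⟨A, K, P, hA, hK, htau⟩ := exists_tauNat_le_sum_tauMajorant hk B
  obtain ⟨C, hC, hsum⟩ := exists_sum_tauMajorant_div_le k hA hK P
  refine ⟨tauMajorant k A K P, C, hC, ⟨tauMajorant_nonneg k A hK P, fun {z m} hz hmz ↦ ?_⟩, hsum⟩
  rcases le_or_gt m 0 with hm | hm
  · rw [tauInt_of_nonpos k hm, Nat.cast_zero]
    exact sum_nonneg fun d _ ↦ tauMajorant_nonneg k A hK P z d
  · lift m to ℕ using hm.le
    have hm0 : m ≠ 0 := (Int.natCast_pos.1 hm).ne'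
    simpa only [tauInt_natCast k hm0, Int.natCast_dvd_natCast] using
      htau z m hz hm0 (Int.ofNat_le.1 hmz)

lemma le_two_mul_sqrt_sq {n : ℕ} (hn : 1 ≤ n) : n ≤ (2 * n.sqrt) ^ 2 := by
  nlinarith [n.lt_succ_sqrt, Nat.sqrt_pos.2 hn]

lemma three_mul_pow_le_two_mul_sqrt_pow {n : ℕ} (hn : 1 ≤ n) (j : ℕ) :
    3 * n ^ j ≤ (2 * n.sqrt) ^ (2 * j + 2) := by
  have hthree : 3 ≤ (2 * n.sqrt) ^ 2 := by nlinarith [Nat.sqrt_pos.2 hn]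
  calc 3 * n ^ j ≤ (2 * n.sqrt) ^ 2 * ((2 * n.sqrt) ^ 2) ^ j := by
        gcongr
        exact le_two_mul_sqrt_sq hn
    _ = (2 * n.sqrt) ^ (2 * j + 2) := by rw [← pow_mul, ← pow_add, add_comm]

lemma le_two_mul_sqrt_pow {U u : ℕ} (hU : 1 ≤ U) (hu : u ≤ 2 * U) (B : ℕ) :
    u ≤ (2 * U.sqrt) ^ (4 * B + 4) :=
  calc u ≤ 2 * U := hu
    _ ≤ 3 * U ^ (2 * B + 1) :=
        Nat.mul_le_mul (by norm_num) (Nat.le_self_pow (2 * B).succ_ne_zero U)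
    _ ≤ (2 * U.sqrt) ^ (2 * (2 * B + 1) + 2) := three_mul_pow_le_two_mul_sqrt_pow hU _
    _ = (2 * U.sqrt) ^ (4 * B + 4) := by ring

lemma sign_mul_add_mul_le {B U V q u v : ℕ} {ε : ℤ} (hU : 1 ≤ U) (hq : q ≤ (V * U) ^ B)
    (hε : ε = 1 ∨ ε = -1) (hu : u ≤ 2 * U) (hv : v ≤ V) :
    ε * v + (u : ℤ) * q ≤ ((2 * (max U V).sqrt) ^ (4 * B + 4) : ℕ) := by
  set W := max U V
  have hUW : U ≤ W := le_max_left U V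
  have hVW : V ≤ W := le_max_right U V
  have hW : 1 ≤ W := hU.trans hUW
  have hnat : v + u * q ≤ (2 * W.sqrt) ^ (4 * B + 4) :=
    calc v + u * q ≤ W + (2 * W) * (W * W) ^ B := by
          gcongr
          · exact hv.trans hVW
          · exact hu.trans (by gcongr)
          · exact hq.trans (by gcongr)
      _ = W + 2 * W ^ (2 * B + 1) := by ring
      _ ≤ W ^ (2 * B + 1) + 2 * W ^ (2 * B + 1) := by
          gcongr
          exact Nat.le_self_pow (2 * B).succ_ne_zero W
      _ = 3 * W ^ (2 * B + 1) := by ring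
      _ ≤ (2 * W.sqrt) ^ (2 * (2 * B + 1) + 2) := three_mul_pow_le_two_mul_sqrt_pow hW _
      _ = (2 * W.sqrt) ^ (4 * B + 4) := by ring
  zify at hnat
  push_cast
  rcases hε with rfl | rfl <;> linarith [v.cast_nonneg (α := ℤ)]

lemma log_sqrt_le_log {m n : ℕ} (hm : 1 ≤ m) (hmn : m ≤ n) : Real.log m.sqrt ≤ Real.log n :=
  Real.log_le_log (by exact_mod_cast Nat.sqrt_pos.2 hm) (by exact_mod_cast m.sqrt_le_self.trans hmn)

lemma sum_sum_tauInt_mul_tauInt_le {k l B V U q : ℕ} (hU : 1 ≤ U) (hq : q ≤ (V * U) ^ B) {ε : ℤ}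
    (hε : ε = 1 ∨ ε = -1) {g h : ℕ → ℕ → ℝ} (hg : IsTauMajorant k (4 * B + 4) g)
    (hh : IsTauMajorant l (4 * B + 4) h) :
    ∑ u ∈ Ico U (2 * U), ∑ v ∈ Icc 1 V,
        (tauInt k (u : ℤ) : ℝ) * (tauInt l (ε * (v : ℤ) + (u : ℤ) * (q : ℤ)) : ℝ) ≤
      4 * (V * U) * ((∑ d ∈ Icc 1 U.sqrt, g U.sqrt d / d) *
        ∑ e ∈ Icc 1 (max U V).sqrt, h (max U V).sqrt e / e) := by
  refine le_trans ?_ (sum_sum_mul_sum_filter_dvd_le q (Int.isUnit_iff.2 hε) (hg.nonneg _)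
    (hh.nonneg _))
  gcongr with u hu v hv
  · exact sum_nonneg fun d _ ↦ hg.nonneg _ d
  · simpa only [Int.natCast_dvd_natCast] using hg.tauInt_le (m := u) (Nat.sqrt_pos.2 hU)
      (by exact_mod_cast le_two_mul_sqrt_pow hU (mem_Ico.1 hu).2.le B)
  · exact hh.tauInt_le (Nat.sqrt_pos.2 (hU.trans (le_max_left U V)))
      (sign_mul_add_mul_le hU hq hε (mem_Ico.1 hu).2.le (mem_Icc.1 hv).2)

theorem stmt10_general {k l : ℕ} (hk : 1 ≤ k) (hl : 1 ≤ l) (B : ℕ) :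
    ∃ C : ℝ, 0 < C ∧ ∀ V U q : ℕ, 1 ≤ V → 1 ≤ U → q ≤ (V * U) ^ B → ∀ ε : ℤ, (ε = 1 ∨ ε = -1) →
      ∑ u ∈ Ico U (2 * U), ∑ v ∈ Icc 1 V,
          (tauInt k (u : ℤ) : ℝ) * (tauInt l (ε * (v : ℤ) + (u : ℤ) * (q : ℤ)) : ℝ)
        ≤ C * (V * U) * (1 + Real.log (V * U)) ^ (k + l) := by
  obtain ⟨g, C₁, hC₁, hg, hgsum⟩ := exists_isTauMajorant hk (4 * B + 4)
  obtain ⟨h, C₂, hC₂, hh, hhsum⟩ := exists_isTauMajorant hl (4 * B + 4)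
  refine ⟨4 * (C₁ * C₂), by positivity, fun V U q hV hU hq ε hε ↦ ?_⟩
  have hW : 1 ≤ max U V := hU.trans (le_max_left U V)
  have hWVU : max U V ≤ V * U :=
    max_le (Nat.le_mul_of_pos_left U hV) (Nat.le_mul_of_pos_right V hU)
  have hlogU : Real.log U.sqrt ≤ Real.log (V * U) := by
    exact_mod_cast log_sqrt_le_log hU (Nat.le_mul_of_pos_left U hV)
  have hlogW : Real.log (max U V).sqrt ≤ Real.log (V * U) := by
    exact_mod_cast log_sqrt_le_log hW hWVU
  refine (sum_sum_tauInt_mul_tauInt_le hU hq hε hg hh).trans ?_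
  set L := Real.log (V * U)
  have hL : 0 ≤ L := (Real.log_natCast_nonneg _).trans hlogW
  calc _ ≤ 4 * (V * U) * ((C₁ * (1 + L) ^ k) * (C₂ * (1 + L) ^ l)) := by
        gcongr
        · exact sum_nonneg fun e _ ↦ div_nonneg (hh.nonneg _ e) e.cast_nonneg
        · exact (hgsum _).trans (by gcongr)
        · exact (hhsum _).trans (by gcongr)
    _ = 4 * (C₁ * C₂) * (V * U) * (1 + L) ^ (k + l) := by ring

end

/-- for every `k ≥ 2` there is `C_k > 0` such that for all integers
`V₁, U₂, q ≥ 1` with `q ≤ U₂^{k−2}` and every sign `ε₁ ∈ {−1, 1}`: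
`∑_{U₂ ≤ u₂ < 2U₂} ∑_{1 ≤ v₁ ≤ V₁} τ_k(u₂)·τ_k(ε₁v₁ + u₂q)
  ≤ C_k · V₁U₂ · (1 + log(V₁U₂))^{3k}`. -/
theorem stmt10 (k : ℕ) (hk : 2 ≤ k) :
    ∃ C : ℝ, 0 < C ∧ ∀ V₁ U₂ q : ℕ, 1 ≤ V₁ → 1 ≤ U₂ → 1 ≤ q → q ≤ U₂ ^ (k - 2) →
      ∀ ε₁ : ℤ, (ε₁ = 1 ∨ ε₁ = -1) →
      (∑ u₂ ∈ Finset.Ico U₂ (2 * U₂), ∑ v₁ ∈ Finset.Icc 1 V₁,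
          (tauInt k (u₂ : ℤ) : ℝ) * (tauInt k (ε₁ * (v₁ : ℤ) + (u₂ : ℤ) * (q : ℤ)) : ℝ))
        ≤ C * ((V₁ : ℝ) * (U₂ : ℝ)) * (1 + Real.log ((V₁ : ℝ) * (U₂ : ℝ))) ^ (3 * k) := by
  obtain ⟨C, hC, h⟩ := stmt10_general (k := k) (l := k) (by omega) (by omega) k
  refine ⟨C, hC, fun V U q hV hU _ hqU ε hε ↦ (h V U q hV hU ?_ ε hε).trans ?_⟩
  · exact hqU.trans <| (Nat.pow_le_pow_right hU (k.sub_le 2)).trans <|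
      Nat.pow_le_pow_left (Nat.le_mul_of_pos_left U hV) k
  · have hlog : 0 ≤ Real.log (V * U) := by exact_mod_cast Real.log_natCast_nonneg (V * U)
    gcongr
    · linarith
    · omega
end
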